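/- arXiv:0810.2731 — 5 statements merged into one kernel-verified Lean document; each statement's English description precedes it below -/
import Mathlib

section
/- Fix integers ℓ≥1 and n≥0. There exists a bijection Ψ : G_{ℓ,n} → G_{ℓ,n} such that for every σ ∈ G_{ℓ,n}: Der(Ψ(σ)) = Der(σ), maf Ψ(σ) = maj σ, exc Ψ(σ) = exc σ, fix Ψ(σ) = fix σ and col Ψ(σ) = col σ. In particular fmaf Ψ(σ) = fmaj σ. -/
/-!
The statistics `exc`, `fix` and `col` depend only on the derangement part, so it suffices to show
that `maj` and `maf` have the same distribution on the set of all `σ` with a prescribed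
derangement part `τ`, of size `m` say; the bijection is then assembled fiber by fiber. With
`k = n - m`, such `σ` correspond to the `k`-subsets `S` of the `n` places, `S` being the set of
fixed points (`CP.build`, `CP.sum_fiber`).

For `maf`, the generating function `∑_S q ^ maf` is `q ^ maj τ` times the generating function of
`∑ S - (k choose 2)`, which is the Gaussian binomial coefficient `[m + k choose k]_q`
(`sum_X_pow_sum_sub`).

For `maj`, a fixed point inserted next to the letter `τ_j` compares with it in a way that depends
only on whether `j` is an excedance of `τ`: it is smaller than a preceding excedance letter,
greater than a preceding non-excedance letter, and likewise for following letters
(`CP.descAt_build`). The generating functions of the words ending in a letter of `τ` and of those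
ending in a fixed point satisfy a joint recursion obtained by deleting the last letter. Using both
`q`-Pascal rules, and the fact that an excedance followed by a non-excedance is a descent while a
non-excedance followed by an excedance is an ascent, this recursion is solved in closed form
(`endLetter_endFixed`), and the two parts add up to `q ^ maj τ [m + k choose k]_q`
(`sum_X_pow_insMaj`).
-/

open Finset

/-- A colored permutation in `G_{ℓ,n} ≅ C_ℓ ≀ S_n`: an underlying permutation of `Fin n`
together with a color (exponent of `ζ`) attached to each position. The letter at (0-based)
position `i` of the word of `σ` is `ζ^(σ.2 i) · (σ.1 i + 1)` (1-based value `σ.1 i + 1`). -/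
abbrev CP (ℓ n : ℕ) := Equiv.Perm (Fin n) × (Fin n → Fin ℓ)

namespace CP

variable {ℓ n : ℕ}

/-- `gtLetter a b` : the letter `a = (colorIndex, value)` is greater than `b` in the order
`1 > ζ > ⋯ > ζ^{ℓ-1}` on colors, colors compared first. -/
def gtLetter (a b : ℕ × ℕ) : Prop := a.1 < b.1 ∨ (a.1 = b.1 ∧ b.2 < a.2)

instance (a b : ℕ × ℕ) : Decidable (gtLetter a b) := by unfold gtLetter; infer_instance

/-- The letter (color index, 0-based absolute value) at 0-based position `i`. -/
def letter (σ : CP ℓ n) (i : ℕ) : ℕ × ℕ :=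
  if h : i < n then ((σ.2 ⟨i, h⟩ : ℕ), (σ.1 ⟨i, h⟩ : ℕ)) else (0, 0)

/-- 0-based descent positions : `i < n-1` such that `x_{i+1} > x_{i+2}` (1-based positions). -/
def desSet (σ : CP ℓ n) : Finset ℕ :=
  (range (n - 1)).filter fun i => gtLetter (letter σ i) (letter σ (i + 1))

/-- Major index: sum of the (1-based) descent places. -/
def maj (σ : CP ℓ n) : ℕ := ∑ i ∈ desSet σ, (i + 1)

/-- Number of descents. -/
def des (σ : CP ℓ n) : ℕ := (desSet σ).card

/-- `col σ = Σ_j j·#{i : ε_{x_i} = ζ^j}`. -/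
def col (σ : CP ℓ n) : ℕ := ∑ i, (σ.2 i : ℕ)

/-- flag major index. -/
def fmaj (σ : CP ℓ n) : ℕ := ℓ * maj σ + col σ

/-- The set of fixed points (position fixed and color `ζ^0 = 1`). -/
def fixSet (σ : CP ℓ n) : Finset (Fin n) :=
  univ.filter fun i => σ.1 i = i ∧ (σ.2 i : ℕ) = 0

def fix (σ : CP ℓ n) : ℕ := (fixSet σ).card

/-- Number of excedances `x_i > i`. -/
def exc (σ : CP ℓ n) : ℕ :=
  (univ.filter fun i : Fin n => (σ.2 i : ℕ) = 0 ∧ (i : ℕ) < (σ.1 i : ℕ)).card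

lemma card_nonfix (σ : CP ℓ n) : ((fixSet σ)ᶜ).card = n - fix σ := by
  rw [Finset.card_compl, fix, Fintype.card_fin]

lemma card_vals (σ : CP ℓ n) : (((fixSet σ)ᶜ).image σ.1).card = n - fix σ := by
  rw [Finset.card_image_of_injective _ σ.1.injective, card_nonfix]

/-- The bijection from nonfixed positions to the set of their values. -/
def derMid (σ : CP ℓ n) :
    {x // x ∈ ((fixSet σ)ᶜ : Finset (Fin n))} ≃ {x // x ∈ ((fixSet σ)ᶜ).image σ.1} where
  toFun p := ⟨σ.1 p.1, Finset.mem_image_of_mem _ p.2⟩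
  invFun v := ⟨σ.1.symm v.1, by
    obtain ⟨p, hp, hpv⟩ := Finset.mem_image.mp v.2
    simpa [← hpv] using hp⟩
  left_inv p := by simp
  right_inv v := by simp

/-- The derangement part `Der σ`: delete the fixed points of the word of `σ`, replace each
absolute value by its rank among the remaining values, and keep the colors. -/
def Der (σ : CP ℓ n) : CP ℓ (n - fix σ) :=
  let eP := ((fixSet σ)ᶜ).orderIsoOfFin (card_nonfix σ)
  let eV := (((fixSet σ)ᶜ).image σ.1).orderIsoOfFin (card_vals σ)
  (eP.toEquiv.trans ((derMid σ).trans eV.toEquiv.symm), fun i => σ.2 (eP i))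

/-- `maf σ = maj (Der σ) + Σ_{j=1}^k (i_j − j)` over the (1-based) fixed points
`i_1 < ⋯ < i_k`; with 0-based fixed positions this is `Σ f − k(k−1)/2`. -/
def maf (σ : CP ℓ n) : ℕ := maj (Der σ) + ((∑ i ∈ fixSet σ, (i : ℕ)) - (fix σ).choose 2)

/-- flag maf. -/
def fmaf (σ : CP ℓ n) : ℕ := ℓ * maf σ + col σ

end CP

/-- The q-integer `[k]_q = 1 + q + ⋯ + q^{k-1}`. -/
def qint {R : Type*} [CommSemiring R] (q : R) (k : ℕ) : R := ∑ i ∈ range k, q ^ i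

/-- Transport a colored permutation along an equality of sizes. -/
def castCP {ℓ a b : ℕ} (h : a = b) (σ : CP ℓ a) : CP ℓ b := h ▸ σ

/-! ### Gaussian binomial coefficients -/

section Counting

open Polynomial

/-- The Gaussian binomial coefficient `[m + k choose k]` in the variable `X`, defined by one of
the two `q`-Pascal rules. -/
noncomputable def gaussBinom : ℕ → ℕ → ℤ[X]
  | 0, _ => 1
  | _ + 1, 0 => 1
  | m + 1, k + 1 => gaussBinom m (k + 1) + X ^ (m + 1) * gaussBinom (m + 1) k
termination_by m k => m + k

@[simp] lemma gaussBinom_zero_left (k : ℕ) : gaussBinom 0 k = 1 := by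
  rw [gaussBinom]

@[simp] lemma gaussBinom_zero_right (m : ℕ) : gaussBinom m 0 = 1 := by
  cases m <;> rw [gaussBinom]

lemma gaussBinom_succ (m k : ℕ) : gaussBinom (m + 1) (k + 1) =
    gaussBinom m (k + 1) + X ^ (m + 1) * gaussBinom (m + 1) k := by
  rw [gaussBinom]

/-- The other `q`-Pascal rule. -/
lemma gaussBinom_succ' (m k : ℕ) : gaussBinom (m + 1) (k + 1) =
    X ^ (k + 1) * gaussBinom m (k + 1) + gaussBinom (m + 1) k := by
  induction h : m + k generalizing m k with
  | zero =>
    obtain ⟨rfl, rfl⟩ : m = 0 ∧ k = 0 := by omega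
    simp [gaussBinom_succ]; ring
  | succ N ih =>
    rw [gaussBinom_succ]
    rcases m with _ | m <;> rcases k with _ | k
    · omega
    · have h1 := ih 0 k (by omega)
      have h2 := gaussBinom_succ 0 k
      simp only [zero_add, gaussBinom_zero_left] at *
      linear_combination X ^ 1 * h1 - h2
    · have h1 := ih m 0 (by omega)
      have h2 := gaussBinom_succ m 0
      simp only [zero_add, gaussBinom_zero_right] at *
      linear_combination h1 - X * h2
    · have h1 := ih m (k + 1) (by omega)
      have h2 := ih (m + 1) k (by omega)
      have h3 := gaussBinom_succ m (k + 1)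
      have h4 := gaussBinom_succ (m + 1) k
      linear_combination h1 + X ^ (m + 2) * h2 - X ^ (k + 2) * h3 - h4

/-! ### Subsets of an initial segment, split by their largest candidate -/

lemma sum_powersetCard_range_succ (N k : ℕ) (f : Finset ℕ → ℤ[X]) :
    ∑ S ∈ powersetCard (k + 1) (range (N + 1)), f S =
      ∑ S ∈ powersetCard (k + 1) (range N), f S +
        ∑ S ∈ powersetCard k (range N), f (insert N S) := by
  rw [Finset.range_add_one, Finset.powersetCard_succ_insert (by simp), Finset.sum_union,
    Finset.sum_image]
  · intro S hS T hT h
    simp only [mem_coe, mem_powersetCard] at hS hT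
    have hS' : N ∉ S := fun h => by simpa using hS.1 h
    have hT' : N ∉ T := fun h => by simpa using hT.1 h
    simpa [hS', hT'] using congrArg (fun U => U.erase N) h
  · rw [Finset.disjoint_left]
    intro S hS hT
    obtain ⟨T, -, rfl⟩ := Finset.mem_image.mp hT
    have := (mem_powersetCard.mp hS).1 (mem_insert_self N T)
    simp at this

/-- The `k`-subsets `S` of `{0, …, m + k - 1}` are counted by `∑ S` with generating function
`q ^ (k choose 2) [m + k choose k]_q`. -/
lemma sum_X_pow_sum (m k : ℕ) :
    ∑ S ∈ powersetCard k (range (m + k)), (X : ℤ[X]) ^ (∑ i ∈ S, i) =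
      X ^ (k.choose 2) * gaussBinom m k := by
  induction h : m + k generalizing m k with
  | zero =>
    obtain ⟨rfl, rfl⟩ : m = 0 ∧ k = 0 := by omega
    simp
  | succ N ih =>
    rcases k with _ | k
    · simp
    rw [sum_powersetCard_range_succ]
    have h2 : ∑ S ∈ powersetCard k (range N), (X : ℤ[X]) ^ (∑ i ∈ insert N S, i) =
        X ^ N * ∑ S ∈ powersetCard k (range N), (X : ℤ[X]) ^ (∑ i ∈ S, i) := by
      rw [Finset.mul_sum]
      refine Finset.sum_congr rfl fun S hS => ?_
      rw [Finset.sum_insert, pow_add]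
      exact fun h => by simpa using (mem_powersetCard.mp hS).1 h
    have hc : (k + 1).choose 2 = k + k.choose 2 := by
      rw [Nat.choose_succ_succ' k 1, Nat.choose_one_right]
    rw [h2, ih m k (by omega), hc]
    rcases m with _ | m
    · rw [powersetCard_eq_empty.mpr (by simp; omega)]
      obtain rfl : k = N := by omega
      simp [pow_add]
    · rw [ih m (k + 1) (by omega), gaussBinom_succ, hc]
      obtain rfl : N = m + 1 + k := by omega
      ring

lemma choose_two_le_sum (S : Finset ℕ) : S.card.choose 2 ≤ ∑ i ∈ S, i := by
  induction h : S.card generalizing S with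
  | zero => simp
  | succ k ih =>
    have hne : S.Nonempty := card_pos.mp (by omega)
    have hmem := S.max'_mem hne
    have hle : S ⊆ range (S.max' hne + 1) := fun x hx => by
      simpa [Nat.lt_succ_iff] using S.le_max' x hx
    have hcard := card_le_card hle
    rw [card_range] at hcard
    have h1 := ih (S.erase (S.max' hne)) (by rw [card_erase_of_mem hmem]; omega)
    have hc : (k + 1).choose 2 = k + k.choose 2 := by
      rw [Nat.choose_succ_succ' k 1, Nat.choose_one_right]
    rw [← Finset.add_sum_erase S _ hmem, hc]
    omega

lemma sum_X_pow_sum_sub (m k : ℕ) :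
    ∑ S ∈ powersetCard k (range (m + k)), (X : ℤ[X]) ^ (∑ i ∈ S, i - k.choose 2) =
      gaussBinom m k := by
  have hX : (X : ℤ[X]) ^ (k.choose 2) ≠ 0 := pow_ne_zero _ X_ne_zero
  apply mul_left_cancel₀ hX
  rw [← sum_X_pow_sum, Finset.mul_sum]
  refine Finset.sum_congr rfl fun S hS => ?_
  have := choose_two_le_sum S
  rw [(mem_powersetCard.mp hS).2] at this
  rw [← pow_add, Nat.add_sub_cancel' this]

/-! ### The major index of a word with inserted fixed points -/

/-- The number of positions before `i` outside `S`. -/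
def rk (S : Finset ℕ) (i : ℕ) : ℕ := ((range i).filter (· ∉ S)).card

lemma rk_succ (S : Finset ℕ) (i : ℕ) : rk S (i + 1) = rk S i + if i ∈ S then 0 else 1 := by
  unfold rk
  rw [Finset.range_add_one, Finset.filter_insert]
  split_ifs <;> simp_all

lemma rk_congr {S T : Finset ℕ} {N : ℕ} (h : ∀ i < N, (i ∈ S ↔ i ∈ T)) : rk S N = rk T N := by
  unfold rk
  congr 1
  exact Finset.filter_congr fun i hi => by rw [h i (by simpa using hi)]

lemma rk_of_subset {S : Finset ℕ} {N : ℕ} (h : S ⊆ range N) : rk S N = N - S.card := by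
  unfold rk
  rw [Finset.filter_not, Finset.filter_mem_eq_inter, Finset.inter_eq_right.mpr h,
    card_sdiff_of_subset h, card_range]

/-- Let `S` be the set of places of the fixed points inserted into a word `x` whose excedances
and descents are recorded by `E` and `D`. This is the condition for the resulting word to have a
descent at place `i`: a fixed point is smaller than the letter `x_j` just before it iff `E j`, is
greater than the letter `x_j` just after it iff `¬ E j`, and consecutive fixed points increase. -/
def InsDesc (E D : ℕ → Prop) (S : Finset ℕ) (i : ℕ) : Prop :=
  if i ∈ S then i + 1 ∉ S ∧ ¬ E (rk S i) else if i + 1 ∈ S then E (rk S i) else D (rk S i)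

open Classical in
/-- The major index of the word of length `N + 1` with descents given by `InsDesc`. -/
noncomputable def insMaj (E D : ℕ → Prop) (S : Finset ℕ) (N : ℕ) : ℕ :=
  ∑ i ∈ range N, if InsDesc E D S i then i + 1 else 0

open Classical in
/-- The major index of a word of length `N + 1` with descents given by `D`. -/
noncomputable def predMaj (D : ℕ → Prop) (N : ℕ) : ℕ := ∑ i ∈ range N, if D i then i + 1 else 0

lemma insMaj_congr {E D : ℕ → Prop} {S T : Finset ℕ} {N : ℕ} (h : ∀ i ≤ N, (i ∈ S ↔ i ∈ T)) :
    insMaj E D S N = insMaj E D T N := by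
  classical
  refine Finset.sum_congr rfl fun i hi => ?_
  rw [mem_range] at hi
  have : InsDesc E D S i ↔ InsDesc E D T i := by
    unfold InsDesc
    have hrk : rk S i = rk T i := rk_congr fun j hj => h j (by omega)
    simp only [hrk, h i (by omega), h (i + 1) (by omega)]
  simp only [this]

open Classical in
lemma insMaj_succ (E D : ℕ → Prop) (S : Finset ℕ) (N : ℕ) : insMaj E D S (N + 1) =
    insMaj E D S N + if InsDesc E D S N then N + 1 else 0 := by
  unfold insMaj
  rw [sum_range_succ]

/-- Generating function of words with `k` inserted fixed points that consist of `N` letters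
followed by a letter of the original word. -/
noncomputable def endLetter (E D : ℕ → Prop) (N k : ℕ) : ℤ[X] :=
  ∑ S ∈ powersetCard k (range N), X ^ insMaj E D S N

/-- Generating function of words with `k + 1` inserted fixed points that consist of `N` letters
followed by a fixed point. -/
noncomputable def endFixed (E D : ℕ → Prop) (N k : ℕ) : ℤ[X] :=
  ∑ S ∈ powersetCard k (range N), X ^ insMaj E D (insert N S) N

section Steps

open Classical

variable {E D : ℕ → Prop} {S : Finset ℕ} {N : ℕ}

lemma insMaj_letter_letter (hS : S ⊆ range N) : insMaj E D S (N + 1) =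
    insMaj E D S N + if D (N - S.card) then N + 1 else 0 := by
  have h1 : N ∉ S := fun h => by simpa using hS h
  have h2 : N + 1 ∉ S := fun h => by simpa using hS h
  simp [insMaj_succ, InsDesc, h1, h2, rk_of_subset hS]

lemma insMaj_letter_fixed (hS : S ⊆ range N) : insMaj E D (insert (N + 1) S) (N + 1) =
    insMaj E D S N + if E (N - S.card) then N + 1 else 0 := by
  have h1 : N ∉ S := fun h => by simpa using hS h
  have h2 : rk (insert (N + 1) S) N = rk S N := rk_congr fun i hi => by
    simp; omega
  have h3 : insMaj E D (insert (N + 1) S) N = insMaj E D S N := insMaj_congr fun i hi => by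
    simp; omega
  simp [insMaj_succ, InsDesc, h1, h2, h3, rk_of_subset hS]

lemma insMaj_fixed_letter (hS : S ⊆ range N) : insMaj E D (insert N S) (N + 1) =
    insMaj E D (insert N S) N + if ¬ E (N - S.card) then N + 1 else 0 := by
  have h1 : N + 1 ∉ S := fun h => by simpa using hS h
  have h2 : rk (insert N S) N = rk S N := rk_congr fun i hi => by
    simp; omega
  simp [insMaj_succ, InsDesc, h1, h2, rk_of_subset hS]

lemma insMaj_fixed_fixed : insMaj E D (insert (N + 1) (insert N S)) (N + 1) =
    insMaj E D (insert N S) N := by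
  have h3 : insMaj E D (insert (N + 1) (insert N S)) N = insMaj E D (insert N S) N :=
    insMaj_congr fun i hi => by simp; omega
  simp [insMaj_succ, InsDesc, h3]

lemma endLetter_succ_zero : endLetter E D (N + 1) 0 =
    endLetter E D N 0 * X ^ (if D N then N + 1 else 0) := by
  simp only [endLetter, powersetCard_zero, sum_singleton]
  rw [insMaj_letter_letter (by simp), pow_add]
  simp

lemma endFixed_succ_zero : endFixed E D (N + 1) 0 =
    endLetter E D N 0 * X ^ (if E N then N + 1 else 0) := by
  simp only [endLetter, endFixed, powersetCard_zero, sum_singleton]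
  rw [insMaj_letter_fixed (by simp), pow_add]
  simp

lemma endLetter_succ_succ (k : ℕ) : endLetter E D (N + 1) (k + 1) =
    endLetter E D N (k + 1) * X ^ (if D (N - (k + 1)) then N + 1 else 0) +
      endFixed E D N k * X ^ (if ¬ E (N - k) then N + 1 else 0) := by
  simp only [endLetter, endFixed]
  rw [sum_powersetCard_range_succ, Finset.sum_mul, Finset.sum_mul]
  congr 1 <;> refine Finset.sum_congr rfl fun S hS => ?_ <;>
    obtain ⟨hS, hc⟩ := mem_powersetCard.mp hS
  · rw [insMaj_letter_letter hS, hc, pow_add]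
  · rw [insMaj_fixed_letter hS, hc, pow_add]

lemma endFixed_succ_succ (k : ℕ) : endFixed E D (N + 1) (k + 1) =
    endLetter E D N (k + 1) * X ^ (if E (N - (k + 1)) then N + 1 else 0) + endFixed E D N k := by
  simp only [endLetter, endFixed]
  rw [sum_powersetCard_range_succ, Finset.sum_mul]
  congr 1 <;> refine Finset.sum_congr rfl fun S hS => ?_
  · obtain ⟨hS, hc⟩ := mem_powersetCard.mp hS
    rw [insMaj_letter_fixed hS, hc, pow_add]
  · rw [insMaj_fixed_fixed]

lemma endLetter_of_lt {k : ℕ} (h : N < k) : endLetter E D N k = 0 := by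
  rw [endLetter, powersetCard_eq_empty.mpr (by simpa using h), sum_empty]

lemma predMaj_succ (m : ℕ) : predMaj D (m + 1) = predMaj D m + if D m then m + 1 else 0 := by
  unfold predMaj
  rw [sum_range_succ]

/-- Closed forms of the two generating functions. The hypotheses say that an excedance followed
by a non-excedance is a descent, and that a non-excedance followed by an excedance is not. -/
lemma endLetter_endFixed (h1 : ∀ i, E i → ¬ E (i + 1) → D i) (h2 : ∀ i, ¬ E i → E (i + 1) → ¬ D i)
    (N m k : ℕ) (h : m + k = N) :
    endLetter E D N k = X ^ predMaj D m * (if E m then 1 else X ^ k) * gaussBinom m k ∧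
    endFixed E D N k =
      X ^ predMaj D (m - 1) * (if 0 < m ∧ E (m - 1) then X ^ m else 1) * gaussBinom m k := by
  induction N generalizing m k with
  | zero =>
    obtain ⟨rfl, rfl⟩ : m = 0 ∧ k = 0 := by omega
    simp [endLetter, endFixed, insMaj, predMaj]
  | succ N ih =>
    rcases k with _ | k
    · obtain rfl : m = N + 1 := by omega
      have := (ih N 0 (by omega)).1
      rw [endLetter_succ_zero, endFixed_succ_zero, this, predMaj_succ]
      constructor
      · simp [pow_add]
      · simp
    · rw [endLetter_succ_succ, endFixed_succ_succ, (ih m k (by omega)).2]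
      rcases m with _ | m
      · obtain rfl : k = N := by omega
        rw [endLetter_of_lt (by omega)]
        constructor
        · by_cases e : E 0 <;> simp [e, predMaj]
        · simp [predMaj]
      · rw [(ih m (k + 1) (by omega)).1]
        obtain rfl : N = m + k + 1 := by omega
        have e1 : m + k + 1 - (k + 1) = m := by omega
        have e2 : m + k + 1 - k = m + 1 := by omega
        have g1 := gaussBinom_succ m k
        have g2 := gaussBinom_succ' m k
        have h1 := h1 m
        have h2 := h2 m
        rw [e1, e2, predMaj_succ]
        simp only [Nat.add_sub_cancel, Nat.zero_lt_succ, true_and]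
        constructor
        · by_cases a : E m <;> by_cases b : E (m + 1) <;> by_cases d : D m <;>
            simp only [a, b, d, if_true, if_false, not_true, not_false_iff, forall_const,
              false_imp_iff, imp_false, pow_zero, mul_one, add_zero] at h1 h2 ⊢
          · linear_combination (-X ^ (predMaj D m) * X ^ (m + 1)) * g2
          · linear_combination (-X ^ (predMaj D m)) * g1
          · linear_combination (-X ^ (predMaj D m + m + 1 + k + 1)) * g1
          · linear_combination (-X ^ (predMaj D m)) * g2
          · linear_combination (-X ^ (predMaj D m + m + 1 + k + 1)) * g2
          · linear_combination (-X ^ (predMaj D m + k + 1)) * g1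
        · by_cases a : E m <;>
            simp only [a, if_true, if_false, pow_zero, mul_one]
          · linear_combination (-X ^ (predMaj D m) * X ^ (m + 1)) * g2
          · linear_combination (-X ^ (predMaj D m)) * g2

end Steps

/-- Inserting `k` fixed points in all possible ways into a word of length `m` multiplies
`q ^ maj` by `[m + k choose k]_q`. -/
lemma sum_X_pow_insMaj {E D : ℕ → Prop} (h1 : ∀ i, E i → ¬ E (i + 1) → D i)
    (h2 : ∀ i, ¬ E i → E (i + 1) → ¬ D i) (m k : ℕ) :
    ∑ S ∈ powersetCard k (range (m + k)), (X : ℤ[X]) ^ insMaj E D S (m + k - 1) =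
      X ^ predMaj D (m - 1) * gaussBinom m k := by
  rcases k with _ | k
  · rcases m with _ | m
    · simp [insMaj, predMaj]
    · have := (endLetter_endFixed h1 h2 m m 0 rfl).1
      simpa [endLetter] using this
  · rw [← add_assoc, sum_powersetCard_range_succ]
    change endLetter E D (m + k) (k + 1) + endFixed E D (m + k) k = _
    rw [(endLetter_endFixed h1 h2 (m + k) m k rfl).2]
    rcases m with _ | m
    · rw [endLetter_of_lt (by omega)]
      simp
    · rw [(endLetter_endFixed h1 h2 (m + 1 + k) m (k + 1) (by omega)).1]
      by_cases a : E m
      · simp [a, gaussBinom_succ]; ring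
      · simp [a, gaussBinom_succ']; ring

end Counting

/-! ### Inserting fixed points into a colored permutation -/

namespace CP

variable {ℓ n m : ℕ}

/-- The colored permutation of size `n` with fixed points at the places in `S`, whose word on the
remaining places is order-isomorphic to `τ`. -/
def build (hℓ : 1 ≤ ℓ) (S : Finset (Fin n)) (hS : (Sᶜ).card = m) (τ : CP ℓ m) : CP ℓ n :=
  (τ.1.extendDomain ((Sᶜ).orderIsoOfFin hS).toEquiv,
    fun i => if h : i ∈ Sᶜ then τ.2 (((Sᶜ).orderIsoOfFin hS).symm ⟨i, h⟩) else ⟨0, hℓ⟩)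

section Build

variable (hℓ : 1 ≤ ℓ) (S : Finset (Fin n)) (hS : (Sᶜ).card = m) (τ : CP ℓ m)

lemma build_fst_of_mem {i : Fin n} (hi : i ∈ S) : (build hℓ S hS τ).1 i = i :=
  Equiv.Perm.extendDomain_apply_not_subtype _ _ (by simpa using hi)

lemma build_snd_of_mem {i : Fin n} (hi : i ∈ S) : (build hℓ S hS τ).2 i = ⟨0, hℓ⟩ := by
  simp [build, hi]

lemma build_fst_emb (j : Fin m) : (build hℓ S hS τ).1 ((Sᶜ).orderEmbOfFin hS j) =
    (Sᶜ).orderEmbOfFin hS (τ.1 j) :=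
  Equiv.Perm.extendDomain_apply_image τ.1 ((Sᶜ).orderIsoOfFin hS).toEquiv j

lemma build_snd_emb (j : Fin m) : (build hℓ S hS τ).2 ((Sᶜ).orderEmbOfFin hS j) = τ.2 j := by
  have h := (Sᶜ).orderEmbOfFin_mem hS j
  simp only [build, h, dif_pos]
  exact congrArg τ.2 (((Sᶜ).orderIsoOfFin hS).symm_apply_apply j)

lemma exists_emb_eq {i : Fin n} (hi : i ∉ S) : ∃ j, (Sᶜ).orderEmbOfFin hS j = i := by
  have : i ∈ Set.range ((Sᶜ).orderEmbOfFin hS) := by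
    rw [range_orderEmbOfFin]; simpa using hi
  exact this

variable {τ}

lemma fixSet_build (hτ : fixSet τ = ∅) : fixSet (build hℓ S hS τ) = S := by
  ext i
  simp only [fixSet, mem_filter, mem_univ, true_and]
  by_cases hi : i ∈ S
  · simp [hi, build_fst_of_mem, build_snd_of_mem]
  · obtain ⟨j, rfl⟩ := exists_emb_eq S hS hi
    have : j ∉ fixSet τ := by simp [hτ]
    simpa [build_fst_emb, build_snd_emb, hi, fixSet] using this

lemma build_injective : Function.Injective (build (ℓ := ℓ) hℓ S hS) := by
  intro τ τ' h
  refine Prod.ext (Equiv.ext fun j => ?_) (funext fun j => ?_)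
  · apply ((Sᶜ).orderEmbOfFin hS).injective
    rw [← build_fst_emb hℓ, h, build_fst_emb]
  · rw [← build_snd_emb hℓ S hS, h, build_snd_emb]

end Build

lemma image_compl_fixSet (σ : CP ℓ n) : ((fixSet σ)ᶜ).image σ.1 = (fixSet σ)ᶜ := by
  refine Finset.eq_of_subset_of_card_le (fun v hv => ?_) ?_
  · obtain ⟨p, hp, rfl⟩ := Finset.mem_image.mp hv
    simp only [fixSet, mem_compl, mem_filter, mem_univ, true_and] at hp ⊢
    rintro ⟨h1, h2⟩
    have h3 := σ.1.injective h1
    rw [h3] at h2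
    exact hp ⟨h3, h2⟩
  · rw [Finset.card_image_of_injective _ σ.1.injective]

lemma emb_Der_fst (σ : CP ℓ n) (j : Fin (n - fix σ)) :
    ((fixSet σ)ᶜ).orderEmbOfFin (card_nonfix σ) ((Der σ).1 j) =
      σ.1 (((fixSet σ)ᶜ).orderEmbOfFin (card_nonfix σ) j) := by
  have key : ∀ (V : Finset (Fin n)) (hV : V = (fixSet σ)ᶜ) (hc : V.card = n - fix σ) (v : V),
      ((fixSet σ)ᶜ).orderEmbOfFin (card_nonfix σ) ((V.orderIsoOfFin hc).symm v) = v := by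
    rintro V rfl hc v
    exact congrArg Subtype.val ((((fixSet σ)ᶜ).orderIsoOfFin hc).apply_symm_apply v)
  exact key _ (image_compl_fixSet σ) (card_vals σ) _

lemma Der_snd (σ : CP ℓ n) (j : Fin (n - fix σ)) :
    (Der σ).2 j = σ.2 (((fixSet σ)ᶜ).orderEmbOfFin (card_nonfix σ) j) := rfl

lemma build_Der (hℓ : 1 ≤ ℓ) (σ : CP ℓ n) :
    build hℓ (fixSet σ) (card_nonfix σ) (Der σ) = σ := by
  refine Prod.ext (Equiv.ext fun i => ?_) (funext fun i => ?_)
  all_goals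
    by_cases hi : i ∈ fixSet σ
  · rw [build_fst_of_mem _ _ _ _ hi]
    simp only [fixSet, mem_filter] at hi
    exact hi.2.1.symm
  · obtain ⟨j, rfl⟩ := exists_emb_eq _ (card_nonfix σ) hi
    rw [build_fst_emb, emb_Der_fst]
  · rw [build_snd_of_mem _ _ _ _ hi]
    simp only [fixSet, mem_filter] at hi
    exact Fin.ext hi.2.2.symm
  · obtain ⟨j, rfl⟩ := exists_emb_eq _ (card_nonfix σ) hi
    rw [build_snd_emb, Der_snd]

lemma fixSet_Der (σ : CP ℓ n) : fixSet (Der σ) = ∅ := by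
  ext j
  have h := ((fixSet σ)ᶜ).orderEmbOfFin_mem (card_nonfix σ) j
  simp only [fixSet, mem_filter, mem_univ, true_and, notMem_empty, iff_false, mem_compl] at h ⊢
  rintro ⟨h1, h2⟩
  refine h ⟨?_, ?_⟩
  · change σ.1 (((fixSet σ)ᶜ).orderEmbOfFin (card_nonfix σ) j) =
      ((fixSet σ)ᶜ).orderEmbOfFin (card_nonfix σ) j
    rw [← emb_Der_fst, h1]
  · exact h2

/-- The derangement part together with its size. -/
def sigmaDer (σ : CP ℓ n) : Σ m, CP ℓ m := ⟨n - fix σ, Der σ⟩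

lemma sigmaDer_build (hℓ : 1 ≤ ℓ) (S : Finset (Fin n)) (hS : (Sᶜ).card = m) {τ : CP ℓ m}
    (hτ : fixSet τ = ∅) : sigmaDer (build hℓ S hS τ) = ⟨m, τ⟩ := by
  have key : ∀ (T : Finset (Fin n)) (_ : T = S) (m' : ℕ) (hT : (Tᶜ).card = m') (τ' : CP ℓ m')
      (_ : build hℓ T hT τ' = build hℓ S hS τ), (⟨m', τ'⟩ : Σ m, CP ℓ m) = ⟨m, τ⟩ := by
    rintro T rfl m' hT τ' h
    obtain rfl : m' = m := hT.symm.trans hS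
    rw [build_injective hℓ T hT h]
  exact key _ (fixSet_build hℓ S hS hτ) _ _ _ (build_Der hℓ _)

/-! ### Statistics of a colored permutation from its derangement part -/

lemma exc_build (hℓ : 1 ≤ ℓ) (S : Finset (Fin n)) (hS : (Sᶜ).card = m) (τ : CP ℓ m) :
    exc (build hℓ S hS τ) = exc τ := by
  unfold exc
  rw [← Finset.card_map ((Sᶜ).orderEmbOfFin hS).toEmbedding]
  congr 1
  ext i
  simp only [mem_filter, mem_univ, true_and, mem_map, RelEmbedding.coe_toEmbedding]
  by_cases hi : i ∈ S
  · rw [build_fst_of_mem _ _ _ _ hi]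
    constructor
    · rintro ⟨-, h⟩; omega
    · rintro ⟨j, -, rfl⟩
      exact absurd hi (mem_compl.mp ((Sᶜ).orderEmbOfFin_mem hS j))
  · obtain ⟨j, rfl⟩ := exists_emb_eq _ hS hi
    rw [build_fst_emb, build_snd_emb, Fin.val_fin_lt, ((Sᶜ).orderEmbOfFin hS).lt_iff_lt]
    simp

lemma col_build (hℓ : 1 ≤ ℓ) (S : Finset (Fin n)) (hS : (Sᶜ).card = m) (τ : CP ℓ m) :
    col (build hℓ S hS τ) = col τ := by
  unfold col
  rw [← Finset.sum_add_sum_compl S, Finset.sum_eq_zero, zero_add]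
  · rw [← Finset.map_orderEmbOfFin_univ (Sᶜ) hS, Finset.sum_map]
    refine Finset.sum_congr rfl fun j _ => ?_
    exact congrArg _ (build_snd_emb hℓ S hS τ j)
  · intro i hi
    rw [build_snd_of_mem _ _ _ _ hi]

lemma exc_sigmaDer (hℓ : 1 ≤ ℓ) (σ : CP ℓ n) : exc (sigmaDer σ).2 = exc σ :=
  (exc_build hℓ _ (card_nonfix σ) (Der σ)).symm.trans (congrArg exc (build_Der hℓ σ))

lemma col_sigmaDer (hℓ : 1 ≤ ℓ) (σ : CP ℓ n) : col (sigmaDer σ).2 = col σ :=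
  (col_build hℓ _ (card_nonfix σ) (Der σ)).symm.trans (congrArg col (build_Der hℓ σ))

/-- `τ` has an excedance at the (0-based) place `i`. -/
def ExcAt (τ : CP ℓ m) (i : ℕ) : Prop := (letter τ i).1 = 0 ∧ i < (letter τ i).2

/-- `τ` has a descent at the (0-based) place `i`. For `i ≥ m - 1` this involves the junk letter
`(0, 0)`; those values are never counted. -/
def DescAt (τ : CP ℓ m) (i : ℕ) : Prop := gtLetter (letter τ i) (letter τ (i + 1))

lemma letter_of_lt (τ : CP ℓ m) {i : ℕ} (h : i < m) :
    letter τ i = ((τ.2 ⟨i, h⟩ : ℕ), (τ.1 ⟨i, h⟩ : ℕ)) := dif_pos h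

lemma letter_of_le (τ : CP ℓ m) {i : ℕ} (h : m ≤ i) : letter τ i = (0, 0) :=
  dif_neg (by omega)

lemma letter_ne {τ : CP ℓ m} (hτ : fixSet τ = ∅) {i : ℕ} (h : i < m) :
    ¬ ((letter τ i).1 = 0 ∧ (letter τ i).2 = i) := by
  rw [letter_of_lt τ h]
  rintro ⟨h1, h2⟩
  have : (⟨i, h⟩ : Fin m) ∈ fixSet τ := by
    simp only [fixSet, mem_filter, mem_univ, true_and]
    exact ⟨Fin.ext h2, h1⟩
  simp [hτ] at this

lemma letter_snd_lt (τ : CP ℓ m) {i : ℕ} (h : i < m) : (letter τ i).2 < m := by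
  rw [letter_of_lt τ h]
  exact (τ.1 _).2

lemma descAt_of_excAt {τ : CP ℓ m} (hτ : fixSet τ = ∅) (i : ℕ) (h : ExcAt τ i)
    (h' : ¬ ExcAt τ (i + 1)) : DescAt τ i := by
  unfold ExcAt DescAt gtLetter at *
  rcases Nat.lt_or_ge (i + 1) m with him | him
  · have h1 := letter_ne hτ him
    omega
  · rcases Nat.lt_or_ge i m with him' | him'
    · have := letter_snd_lt τ him'
      omega
    · rw [letter_of_le τ him'] at h
      simp at h

lemma not_descAt_of_not_excAt {τ : CP ℓ m} (hτ : fixSet τ = ∅) (i : ℕ) (h : ¬ ExcAt τ i)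
    (h' : ExcAt τ (i + 1)) : ¬ DescAt τ i := by
  unfold ExcAt DescAt gtLetter at *
  rcases Nat.lt_or_ge (i + 1) m with him | him
  · have h1 := letter_ne hτ (i := i) (by omega)
    omega
  · rw [letter_of_le τ him] at h'
    simp at h'

lemma maj_eq_predMaj (τ : CP ℓ m) : maj τ = predMaj (DescAt τ) (m - 1) := by
  unfold maj predMaj desSet DescAt
  rw [Finset.sum_filter]
  exact Finset.sum_congr rfl fun i _ => by congr

section MajBuild

variable (hℓ : 1 ≤ ℓ) (S : Finset (Fin n)) (hS : (Sᶜ).card = m)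

lemma rk_emb (j : Fin m) :
    rk (S.map Fin.valEmbedding) ((Sᶜ).orderEmbOfFin hS j : Fin n) = j := by
  have : (range ((Sᶜ).orderEmbOfFin hS j : Fin n)).filter (· ∉ S.map Fin.valEmbedding) =
      ((Iio j).map ((Sᶜ).orderEmbOfFin hS).toEmbedding).map Fin.valEmbedding := by
    ext x
    simp only [mem_filter, mem_range, mem_map, Fin.valEmbedding_apply, mem_Iio,
      RelEmbedding.coe_toEmbedding]
    constructor
    · rintro ⟨hx, hxS⟩
      have hxn : x < n := by omega
      obtain ⟨l, hl⟩ := exists_emb_eq S hS (i := ⟨x, hxn⟩) fun h => hxS ⟨_, h, rfl⟩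
      refine ⟨_, ⟨l, ?_, rfl⟩, by rw [hl]⟩
      rw [← ((Sᶜ).orderEmbOfFin hS).lt_iff_lt, hl]
      exact hx
    · rintro ⟨_, ⟨l, hl, rfl⟩, rfl⟩
      refine ⟨((Sᶜ).orderEmbOfFin hS).lt_iff_lt.mpr hl, ?_⟩
      rintro ⟨a, ha, hal⟩
      have := (Sᶜ).orderEmbOfFin_mem hS l
      rw [← Fin.ext hal] at this
      simp [ha] at this
  rw [rk, this, card_map, card_map, Fin.card_Iio]

variable {τ : CP ℓ m}

lemma letter_build_emb (j : Fin m) :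
    letter (build hℓ S hS τ) ((Sᶜ).orderEmbOfFin hS j : Fin n) =
      ((τ.2 j : ℕ), ((Sᶜ).orderEmbOfFin hS (τ.1 j) : ℕ)) := by
  rw [letter_of_lt _ (Fin.is_lt _)]
  simp [build_fst_emb, build_snd_emb]

lemma letter_build_mem {i : Fin n} (hi : i ∈ S) :
    letter (build hℓ S hS τ) i = (0, (i : ℕ)) := by
  rw [letter_of_lt _ i.2]
  simp [build_fst_of_mem, build_snd_of_mem, hi]

lemma letter_fin (j : Fin m) : letter τ j = ((τ.2 j : ℕ), (τ.1 j : ℕ)) :=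
  letter_of_lt τ j.2

/-- The descents of `build S τ` follow the rule of `InsDesc`. -/
lemma descAt_build (hτ : fixSet τ = ∅) {i : ℕ} (hi : i + 1 < n) :
    DescAt (build hℓ S hS τ) i ↔
      InsDesc (ExcAt τ) (DescAt τ) (S.map Fin.valEmbedding) i := by
  obtain ⟨a, rfl⟩ : ∃ a : Fin n, (a : ℕ) = i := ⟨⟨i, by omega⟩, rfl⟩
  obtain ⟨b, hb⟩ : ∃ b : Fin n, (b : ℕ) = a + 1 := ⟨⟨a + 1, hi⟩, rfl⟩
  have hmem : ∀ c : Fin n, (c : ℕ) ∈ S.map Fin.valEmbedding ↔ c ∈ S := fun c => by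
    simp [Fin.val_inj]
  have hrk := rk_succ (S.map Fin.valEmbedding) a
  unfold DescAt InsDesc
  rw [← hb] at hrk ⊢
  simp only [hmem] at hrk ⊢
  by_cases ha : a ∈ S <;> by_cases hbS : b ∈ S
  · rw [letter_build_mem hℓ S hS ha, letter_build_mem hℓ S hS hbS]
    simp only [ha, hbS, gtLetter, if_true, not_true, false_and, iff_false]
    omega
  · obtain ⟨j, rfl⟩ := exists_emb_eq S hS hbS
    rw [rk_emb, if_pos ha, add_zero] at hrk
    rw [← hrk]
    have hmono := ((Sᶜ).orderEmbOfFin hS).lt_iff_lt (a := τ.1 j) (b := j)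
    have hmono' := ((Sᶜ).orderEmbOfFin hS).lt_iff_lt (a := j) (b := τ.1 j)
    have hne := letter_ne hτ j.2
    have hne' : (Sᶜ).orderEmbOfFin hS (τ.1 j) ≠ a := fun h => by
      have := (Sᶜ).orderEmbOfFin_mem hS (τ.1 j)
      rw [h] at this
      simp [ha] at this
    rw [Ne, Fin.ext_iff] at hne'
    simp only [Fin.lt_def] at hmono hmono'
    rw [letter_fin] at hne
    rw [letter_build_mem hℓ S hS ha, letter_build_emb]
    simp only [ha, hbS, letter_fin, gtLetter, ExcAt, if_true, not_false_iff, true_and]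
    omega
  · obtain ⟨j, rfl⟩ := exists_emb_eq S hS ha
    rw [rk_emb]
    have hmono' := ((Sᶜ).orderEmbOfFin hS).lt_iff_lt (a := j) (b := τ.1 j)
    have hne' : (Sᶜ).orderEmbOfFin hS (τ.1 j) ≠ b := fun h => by
      have := (Sᶜ).orderEmbOfFin_mem hS (τ.1 j)
      rw [h] at this
      simp [hbS] at this
    rw [Ne, Fin.ext_iff] at hne'
    simp only [Fin.lt_def] at hmono'
    rw [letter_build_mem hℓ S hS hbS, letter_build_emb]
    simp only [ha, hbS, letter_fin, gtLetter, ExcAt, if_true, if_false]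
    omega
  · obtain ⟨j, rfl⟩ := exists_emb_eq S hS ha
    obtain ⟨l, rfl⟩ := exists_emb_eq S hS hbS
    rw [rk_emb, rk_emb, if_neg ha] at hrk
    rw [rk_emb]
    have hmono := ((Sᶜ).orderEmbOfFin hS).lt_iff_lt (a := τ.1 l) (b := τ.1 j)
    simp only [Fin.lt_def] at hmono
    rw [letter_build_emb, letter_build_emb]
    simp only [ha, hbS, if_false, ← hrk, letter_fin, gtLetter, hmono]

lemma maj_build (hτ : fixSet τ = ∅) : maj (build hℓ S hS τ) =
    insMaj (ExcAt τ) (DescAt τ) (S.map Fin.valEmbedding) (n - 1) := by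
  classical
  rw [maj_eq_predMaj, predMaj, insMaj]
  refine Finset.sum_congr rfl fun i hi => ?_
  rw [mem_range] at hi
  simp only [descAt_build hℓ S hS hτ (show i + 1 < n by omega)]

end MajBuild

/-! ### Equidistribution on the fibers of the derangement part -/

open Polynomial

/-- A sum over the colored permutations with derangement part `τ` is a sum over the possible sets
of fixed points. -/
lemma sum_fiber (hℓ : 1 ≤ ℓ) {k : ℕ} {τ : CP ℓ m} (hτ : fixSet τ = ∅) (hn : m + k = n)
    (f : CP ℓ n → ℕ) (g : Finset ℕ → ℕ)
    (hfg : ∀ (S : Finset (Fin n)) (hS : (Sᶜ).card = m),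
      f (build hℓ S hS τ) = g (S.map Fin.valEmbedding)) [DecidablePred fun σ : CP ℓ n =>
        sigmaDer σ = ⟨m, τ⟩] :
    ∑ σ : CP ℓ n with sigmaDer σ = ⟨m, τ⟩, (X : ℤ[X]) ^ f σ =
      ∑ S ∈ powersetCard k (range n), (X : ℤ[X]) ^ g S := by
  have hrec : ∀ σ : CP ℓ n, sigmaDer σ = ⟨m, τ⟩ →
      ∃ hS : ((fixSet σ)ᶜ).card = m, build hℓ (fixSet σ) hS τ = σ := by
    intro σ h
    have key : ∀ p : (Σ m, CP ℓ m), p = ⟨m, τ⟩ →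
        (∃ hS : ((fixSet σ)ᶜ).card = p.1, build hℓ (fixSet σ) hS p.2 = σ) →
        ∃ hS : ((fixSet σ)ᶜ).card = m, build hℓ (fixSet σ) hS τ = σ := by
      rintro p rfl h
      exact h
    exact key _ h ⟨card_nonfix σ, build_Der hℓ σ⟩
  refine Finset.sum_bij (fun σ _ => (fixSet σ).map Fin.valEmbedding) ?_ ?_ ?_ ?_
  · intro σ hσ
    obtain ⟨hS, -⟩ := hrec σ (by simpa using hσ)
    rw [card_compl, Fintype.card_fin] at hS
    have hle := card_le_univ (fixSet σ)
    rw [Fintype.card_fin] at hle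
    rw [mem_powersetCard, card_map]
    refine ⟨fun x hx => ?_, by omega⟩
    obtain ⟨y, -, rfl⟩ := Finset.mem_map.mp hx
    simp
  · intro σ hσ σ' hσ' h
    obtain ⟨hS, e⟩ := hrec σ (by simpa using hσ)
    obtain ⟨hS', e'⟩ := hrec σ' (by simpa using hσ')
    rw [← e, ← e']
    have h := Finset.map_injective _ h
    generalize fixSet σ = A at *
    generalize fixSet σ' = B at *
    subst h
    rfl
  · intro T hT
    rw [mem_powersetCard] at hT
    have hmap : (T.attachFin fun x hx => mem_range.mp (hT.1 hx)).map Fin.valEmbedding = T := by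
      simp
    have hc : ((T.attachFin fun x hx => mem_range.mp (hT.1 hx))ᶜ).card = m := by
      rw [card_compl, Fintype.card_fin, card_attachFin]
      omega
    refine ⟨build hℓ _ hc τ, by simp [sigmaDer_build hℓ _ hc hτ], ?_⟩
    rw [fixSet_build hℓ _ hc hτ, hmap]
  · intro σ hσ
    obtain ⟨hS, e⟩ := hrec σ (by simpa using hσ)
    rw [← hfg _ hS, e]

lemma maf_build (hℓ : 1 ≤ ℓ) {k : ℕ} {τ : CP ℓ m} (hτ : fixSet τ = ∅) (hn : m + k = n)
    (S : Finset (Fin n)) (hS : (Sᶜ).card = m) :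
    maf (build hℓ S hS τ) = maj τ + (∑ i ∈ S.map Fin.valEmbedding, i - k.choose 2) := by
  have h1 : maj (Der (build hℓ S hS τ)) = maj τ := by
    change maj (sigmaDer (build hℓ S hS τ)).2 = maj τ
    rw [sigmaDer_build hℓ S hS hτ]
  have hle := card_le_univ S
  rw [card_compl] at hS
  rw [Fintype.card_fin] at hle hS
  have hk : S.card = k := by omega
  rw [maf, h1, fix, fixSet_build hℓ S _ hτ, Finset.sum_map, hk]
  rfl

open Classical in
lemma sum_fiber_eq (hℓ : 1 ≤ ℓ) (d : Σ m, CP ℓ m) :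
    ∑ σ : CP ℓ n with sigmaDer σ = d, (X : ℤ[X]) ^ maf σ =
      ∑ σ : CP ℓ n with sigmaDer σ = d, (X : ℤ[X]) ^ maj σ := by
  by_cases h : ∃ σ : CP ℓ n, sigmaDer σ = d
  · obtain ⟨σ, rfl⟩ := h
    have hle := card_le_univ (fixSet σ)
    rw [Fintype.card_fin] at hle
    have hn : n - fix σ + fix σ = n := Nat.sub_add_cancel hle
    have hτ := fixSet_Der σ
    rw [show sigmaDer σ = ⟨n - fix σ, Der σ⟩ from rfl,
      sum_fiber hℓ hτ hn maf (fun T => maj (Der σ) + (∑ i ∈ T, i - (fix σ).choose 2))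
        (maf_build hℓ hτ hn),
      sum_fiber hℓ hτ hn maj (fun T => insMaj (ExcAt (Der σ)) (DescAt (Der σ)) T (n - 1))
        fun S hS => maj_build hℓ S hS hτ]
    have e1 := sum_X_pow_insMaj (descAt_of_excAt hτ) (not_descAt_of_not_excAt hτ)
      (n - fix σ) (fix σ)
    have e2 := sum_X_pow_sum_sub (n - fix σ) (fix σ)
    rw [hn] at e1 e2
    rw [e1, ← e2, ← maj_eq_predMaj, Finset.mul_sum]
    simp only [pow_add]
  · rw [Finset.filter_false_of_mem]
    · simp
    · exact fun σ _ hσ => h ⟨σ, hσ⟩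

open Classical in
lemma coeff_sum_X_pow {α : Type*} (s : Finset α) (f : α → ℕ) (c : ℕ) :
    (∑ a ∈ s, (X : ℤ[X]) ^ f a).coeff c = ((s.filter fun a => f a = c).card : ℤ) := by
  simp only [finsetSum_coeff, coeff_X_pow, eq_comm (a := c), Finset.sum_boole]

open Classical in
lemma card_fiber_eq (hℓ : 1 ≤ ℓ) (d : (Σ m, CP ℓ m) × ℕ) :
    Fintype.card {σ : CP ℓ n // (sigmaDer σ, maj σ) = d} =
      Fintype.card {σ : CP ℓ n // (sigmaDer σ, maf σ) = d} := by
  have h := congrArg (fun p => p.coeff d.2) (sum_fiber_eq (n := n) hℓ d.1)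
  simp only [coeff_sum_X_pow, Nat.cast_inj, Finset.filter_filter] at h
  rw [Fintype.card_subtype, Fintype.card_subtype]
  simp only [Prod.ext_iff]
  exact h.symm

end CP

/-- There is a bijection `Ψ` of `G_{ℓ,n}` preserving the derangement part,
`exc`, `fix` and `col`, and transforming `maj` into `maf`; in particular it transforms
`fmaj` into `fmaf`. -/
theorem exists_bijection_maf_maj (ℓ n : ℕ) (hℓ : 1 ≤ ℓ) :
    ∃ Ψ : CP ℓ n ≃ CP ℓ n, ∀ σ : CP ℓ n,
      (∃ h : n - CP.fix (Ψ σ) = n - CP.fix σ, castCP h (CP.Der (Ψ σ)) = CP.Der σ) ∧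
      CP.maf (Ψ σ) = CP.maj σ ∧
      CP.exc (Ψ σ) = CP.exc σ ∧
      CP.fix (Ψ σ) = CP.fix σ ∧
      CP.col (Ψ σ) = CP.col σ ∧
      CP.fmaf (Ψ σ) = CP.fmaj σ := by
  classical
  let Ψ : CP ℓ n ≃ CP ℓ n := Equiv.ofFiberEquiv
    (f := fun σ => (CP.sigmaDer σ, CP.maj σ)) (g := fun σ => (CP.sigmaDer σ, CP.maf σ))
    fun d => Fintype.equivOfCardEq (CP.card_fiber_eq hℓ d)
  refine ⟨Ψ, fun σ => ?_⟩
  have hΨ : (CP.sigmaDer (Ψ σ), CP.maf (Ψ σ)) = (CP.sigmaDer σ, CP.maj σ) :=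
    Equiv.ofFiberEquiv_map (f := fun σ : CP ℓ n => (CP.sigmaDer σ, CP.maj σ))
      (g := fun σ : CP ℓ n => (CP.sigmaDer σ, CP.maf σ)) _ σ
  obtain ⟨hD, hmaf⟩ := Prod.ext_iff.mp hΨ
  dsimp only at hD hmaf
  have hexc : CP.exc (Ψ σ) = CP.exc σ := by
    rw [← CP.exc_sigmaDer hℓ (Ψ σ), hD, CP.exc_sigmaDer hℓ]
  have hcol : CP.col (Ψ σ) = CP.col σ := by
    rw [← CP.col_sigmaDer hℓ (Ψ σ), hD, CP.col_sigmaDer hℓ]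
  have hm : n - CP.fix (Ψ σ) = n - CP.fix σ := congrArg Sigma.fst hD
  have hle : ∀ ρ : CP ℓ n, CP.fix ρ ≤ n := fun ρ => by
    simpa [CP.fix] using card_le_univ (CP.fixSet ρ)
  have hfix : CP.fix (Ψ σ) = CP.fix σ := by
    have := hle σ
    have := hle (Ψ σ)
    omega
  have hcast : ∀ p q : (Σ m, CP ℓ m), p = q → ∃ h : p.1 = q.1, castCP h p.2 = q.2 := by
    rintro p q rfl
    exact ⟨rfl, rfl⟩
  exact ⟨hcast _ _ hD, hmaf, hexc, hfix, hcol, by rw [CP.fmaf, CP.fmaj, hmaf, hcol]⟩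
end

section
/- Let ℓ≥1, n≥0 and let σ ∈ D_{ℓ,n} be a colored derangement. For each slot i with 0≤i≤n, the major index of the colored permutation ⟨σ,i⟩ obtained by inserting the fixed point i+1 into the i-th slot satisfies maj⟨σ,i⟩ = maj σ + g_i, where g_i is the value of the i-th slot of σ. -/
/-!
Work with 0-based positions. Call position `j` an excedance if its letter has color `1` and value
larger than `j`; regard the place before the word as a non-excedance and the place after it as an
excedance. Because `σ` has no fixed point, the letter inserted in slot `i` is smaller than its left
neighbour exactly when position `i - 1` is an excedance, and larger than its right neighbour exactly
when position `i` is a non-excedance. Hence (`des_insDer`) the number of descents changes by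
`r i = [i - 1 exceeds] + [i does not exceed] - [descent at i - 1]`, which is `0` or `1`, and
(`maj_insDer`), since the descents to the right move by one place, the major index changes by
`i * r i + [i does not exceed] + #{descents at positions ≥ i}`.

Summing `1 - r j` over `j > i` telescopes (`sum_green_right`): the number of green slots right of
slot `i` is `[i does not exceed] + #{descents at positions ≥ i}`. So at a green slot the change of
`maj` is the number of green slots to its right, which is its value. At a red slot it is `i` more,
and splitting the `i` slots to the left by color (`card_green_add_card_red`) gives the number of all
green slots plus the number of red slots to the left, again the value.
-/

open Finset

section Insertion

variable {ℓ n N : ℕ}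

/-- Extend a colored permutation to `Fin N` by making every element of `F` a fixed point
(with color `1 = ζ^0`), the action on the complement of `F` being that of `σ` transported
along the increasing bijection. -/
def extFix [NeZero ℓ] (F : Finset (Fin N)) (σ : CP ℓ n) (h : Fᶜ.card = n) : CP ℓ N :=
  let e : Fin n ≃o {x // x ∈ (Fᶜ : Finset (Fin N))} := Fᶜ.orderIsoOfFin h
  (σ.1.extendDomain e.toEquiv,
   fun q => if hq : q ∈ (Fᶜ : Finset (Fin N)) then σ.2 (e.symm ⟨q, hq⟩) else 0)

/-- Insertion `⟨σ,i⟩` of the fixed point `i+1` into the `i`-th slot of a colored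
derangement `σ` (0 ≤ i ≤ n): the new letter `i+1` is put at (1-based) position `i+1` and all
absolute values `> i` are shifted by one. -/
def insDer [NeZero ℓ] (σ : CP ℓ n) (i : ℕ) : CP ℓ (n + 1) :=
  extFix {(⟨min i n, by omega⟩ : Fin (n + 1))} σ
    (by simp [Finset.card_compl])


/-- The `i`-th slot of `σ` is green if inserting a fixed point there does not change the
number of descents (otherwise it is red). -/
def isGreen [NeZero ℓ] (σ : CP ℓ n) (i : ℕ) : Prop := CP.des (insDer σ i) = CP.des σ

instance [NeZero ℓ] (σ : CP ℓ n) (i : ℕ) : Decidable (isGreen σ i) := by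
  unfold isGreen; infer_instance

/-- The value `g_i` of the `i`-th slot (0 ≤ i ≤ n) of `σ`: green slots receive the values
`0,…,g` from right to left, red slots the values `g+1,…,n` from left to right. -/
def slotVal [NeZero ℓ] (σ : CP ℓ n) (i : ℕ) : ℕ :=
  if isGreen σ i then ((Finset.range (n + 1)).filter fun j => i < j ∧ isGreen σ j).card
  else ((Finset.range (n + 1)).filter fun j => isGreen σ j).card +
    ((Finset.range (n + 1)).filter fun j => j < i ∧ ¬ isGreen σ j).card

end Insertion

section Proof

variable {ℓ n : ℕ}

/-! ### Letters of the word after insertion -/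

/-- The letter `x'` obtained from `x` when a fixed point is inserted in slot `i`
(0-based values: those `≥ i` are raised by one). -/
def shiftLetter (i : ℕ) (x : ℕ × ℕ) : ℕ × ℕ := (x.1, if x.2 < i then x.2 else x.2 + 1)

lemma gtLetter_shiftLetter (i : ℕ) (x y : ℕ × ℕ) :
    CP.gtLetter (shiftLetter i x) (shiftLetter i y) ↔ CP.gtLetter x y := by
  unfold CP.gtLetter shiftLetter
  dsimp only
  split_ifs <;> omega

lemma insDer_succAbove [NeZero ℓ] (σ : CP ℓ n) (i : ℕ) (hi : i < n + 1) (q : Fin n) :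
    (insDer σ i).1 (Fin.succAbove ⟨i, hi⟩ q) = Fin.succAbove ⟨i, hi⟩ (σ.1 q) ∧
      (insDer σ i).2 (Fin.succAbove ⟨i, hi⟩ q) = σ.2 q := by
  have hp : (⟨min i n, by omega⟩ : Fin (n + 1)) = ⟨i, hi⟩ := by
    ext; simp; omega
  unfold insDer
  rw! [hp]
  set p : Fin (n + 1) := ⟨i, hi⟩
  have hc : ({p}ᶜ : Finset (Fin (n + 1))).card = n := by simp [Finset.card_compl]
  have he : ∀ r : Fin n, ((({p}ᶜ : Finset (Fin (n + 1))).orderIsoOfFin hc r : _) : Fin (n + 1))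
      = p.succAbove r := by
    intro r
    rw [Finset.coe_orderIsoOfFin_apply, Finset.orderEmbOfFin_compl_singleton_apply]
    rfl
  constructor
  · have := Equiv.Perm.extendDomain_apply_image σ.1
      (({p}ᶜ : Finset (Fin (n + 1))).orderIsoOfFin hc).toEquiv q
    simp only [RelIso.coe_fn_toEquiv, he] at this
    exact this
  · have hq : p.succAbove q ∈ ({p}ᶜ : Finset (Fin (n + 1))) := by
      simp [Fin.succAbove_ne]
    have h2 : (({p}ᶜ : Finset (Fin (n + 1))).orderIsoOfFin hc).symm ⟨p.succAbove q, hq⟩ = q := by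
      rw [OrderIso.symm_apply_eq]
      exact Subtype.ext (he q).symm
    exact (dif_pos hq).trans (congrArg σ.2 h2)

lemma insDer_self [NeZero ℓ] (σ : CP ℓ n) (i : ℕ) (hi : i < n + 1) :
    (insDer σ i).1 ⟨i, hi⟩ = ⟨i, hi⟩ ∧ (insDer σ i).2 ⟨i, hi⟩ = 0 := by
  have hp : (⟨min i n, by omega⟩ : Fin (n + 1)) = ⟨i, hi⟩ := by
    ext; simp; omega
  unfold insDer
  rw! [hp]
  constructor
  · exact Equiv.Perm.extendDomain_apply_not_subtype _ _ (by simp)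
  · simp [extFix]

lemma letter_insDer_self [NeZero ℓ] (σ : CP ℓ n) (i : ℕ) (hi : i ≤ n) :
    CP.letter (insDer σ i) i = (0, i) := by
  have h := insDer_self σ i (by omega)
  simp [CP.letter, show i < n + 1 by omega, h.1, h.2]

lemma letter_insDer_lt [NeZero ℓ] (σ : CP ℓ n) (i j : ℕ) (hi : i ≤ n) (hj : j < i) :
    CP.letter (insDer σ i) j = shiftLetter i (CP.letter σ j) := by
  have h := insDer_succAbove σ i (by omega) ⟨j, by omega⟩
  have hs : Fin.succAbove ⟨i, by omega⟩ (⟨j, by omega⟩ : Fin n) = (⟨j, by omega⟩ : Fin (n + 1)) := by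
    ext; simp [Fin.succAbove, Fin.lt_def, hj]
  rw [hs] at h
  simp only [CP.letter, show j < n + 1 by omega, show j < n by omega, dif_pos, h.1, h.2,
    shiftLetter, Fin.succAbove, Fin.lt_def]
  congr 1
  simp only [Fin.val_castSucc]
  split_ifs <;> simp

lemma letter_insDer_ge [NeZero ℓ] (σ : CP ℓ n) (i j : ℕ) (hj : i ≤ j) (hn : j < n) :
    CP.letter (insDer σ i) (j + 1) = shiftLetter i (CP.letter σ j) := by
  have h := insDer_succAbove σ i (by omega) ⟨j, by omega⟩
  have hs : Fin.succAbove ⟨i, by omega⟩ (⟨j, by omega⟩ : Fin n) =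
      (⟨j + 1, by omega⟩ : Fin (n + 1)) := by
    simp [Fin.succAbove, Fin.lt_def, hj]
  rw [hs] at h
  simp only [CP.letter, show j + 1 < n + 1 by omega, show j < n by omega, dif_pos, h.1, h.2,
    shiftLetter, Fin.succAbove, Fin.lt_def]
  congr 1
  simp only [Fin.val_castSucc]
  split_ifs <;> simp

/-! ### Indicators of descents and non-excedances -/

/-- Indicator of a descent at 0-based position `j`; it vanishes for `j + 1 ≥ n`. -/
def dInd (σ : CP ℓ n) (j : ℕ) : ℕ :=
  if j + 1 < n ∧ CP.gtLetter (CP.letter σ j) (CP.letter σ (j + 1)) then 1 else 0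

/-- Indicator of a non-excedance at 0-based position `j < n`. It is `0` for `j ≥ n`, so that the
end of the word behaves as an excedance, i.e. as a letter larger than any inserted one. -/
def nInd (σ : CP ℓ n) (j : ℕ) : ℕ :=
  if j < n ∧ ¬ ((CP.letter σ j).1 = 0 ∧ j < (CP.letter σ j).2) then 1 else 0

/-- Value of `f` at the preceding position, with value `0` before the start of the word. -/
def prevInd (f : ℕ → ℕ) : ℕ → ℕ
  | 0 => 0
  | k + 1 => f k

lemma nInd_le_one (σ : CP ℓ n) (j : ℕ) : nInd σ j ≤ 1 := by
  unfold nInd; split_ifs <;> omega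

lemma nInd_of_ge (σ : CP ℓ n) {j : ℕ} (hj : n ≤ j) : nInd σ j = 0 := by
  unfold nInd; rw [if_neg]; omega

lemma desSet_eq (σ : CP ℓ n) : CP.desSet σ = (range n).filter
    fun j => j + 1 < n ∧ CP.gtLetter (CP.letter σ j) (CP.letter σ (j + 1)) := by
  ext j
  simp only [CP.desSet, mem_filter, mem_range]
  constructor
  · rintro ⟨h, h'⟩; exact ⟨by omega, by omega, h'⟩
  · rintro ⟨-, h, h'⟩; exact ⟨by omega, h'⟩

lemma des_eq_sum (σ : CP ℓ n) : CP.des σ = ∑ j ∈ range n, dInd σ j := by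
  rw [CP.des, desSet_eq, card_filter]; rfl

lemma maj_eq_sum (σ : CP ℓ n) : CP.maj σ = ∑ j ∈ range n, dInd σ j * (j + 1) := by
  rw [CP.maj, desSet_eq, sum_filter]
  refine sum_congr rfl fun j _ => ?_
  unfold dInd; split_ifs <;> simp

/-- In a derangement, no letter of color `1` sits at the position equal to its value. -/
lemma letter_ne_of_fix (σ : CP ℓ n) (hσ : CP.fix σ = 0) {j : ℕ} (hj : j < n) :
    ¬ ((CP.letter σ j).1 = 0 ∧ (CP.letter σ j).2 = j) := by
  rintro ⟨h1, h2⟩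
  simp only [CP.letter, hj, dif_pos] at h1 h2
  rw [CP.fix, card_eq_zero] at hσ
  have : (⟨j, hj⟩ : Fin n) ∈ CP.fixSet σ := by
    simp only [CP.fixSet, mem_filter, mem_univ, true_and]
    exact ⟨Fin.ext h2, h1⟩
  simp [hσ] at this

/-- In a derangement, an excedance followed by a non-excedance forms a descent, and a descent
from a non-excedance can only go to a non-excedance. These two facts make the change in the
number of descents `0` or `1`. -/
lemma ind_bounds (σ : CP ℓ n) (hσ : CP.fix σ = 0) (k : ℕ) :
    nInd σ (k + 1) ≤ dInd σ k + nInd σ k ∧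
      dInd σ k + nInd σ k ≤ 1 + nInd σ (k + 1) := by
  have h : k + 1 < n → _ := letter_ne_of_fix σ hσ (j := k + 1)
  unfold nInd dInd CP.gtLetter
  split_ifs <;> omega

section Derangement

variable [NeZero ℓ] (σ : CP ℓ n) (i : ℕ)

lemma dInd_insDer_lt (hi : i ≤ n) (j : ℕ) (hj : j + 1 < i) :
    dInd (insDer σ i) j = dInd σ j := by
  unfold dInd
  rw [letter_insDer_lt σ i j hi (by omega), letter_insDer_lt σ i (j + 1) hi hj]
  simp only [gtLetter_shiftLetter, show j + 1 < n + 1 by omega, show j + 1 < n by omega]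

lemma dInd_insDer_ge (j : ℕ) (hj : i ≤ j) :
    dInd (insDer σ i) (j + 1) = dInd σ j := by
  unfold dInd
  by_cases h : j + 1 < n
  · rw [letter_insDer_ge σ i j hj (by omega), letter_insDer_ge σ i (j + 1) (by omega) h]
    simp only [gtLetter_shiftLetter, show j + 1 + 1 < n + 1 by omega, h]
  · rw [if_neg (by omega), if_neg (by omega)]

lemma dInd_insDer_prev (k : ℕ) (hk : k + 1 ≤ n) :
    dInd (insDer σ (k + 1)) k = 1 - nInd σ k := by
  unfold dInd nInd
  rw [letter_insDer_lt σ (k + 1) k hk (by omega), letter_insDer_self σ (k + 1) hk]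
  unfold CP.gtLetter shiftLetter
  dsimp only
  split_ifs <;> omega

lemma dInd_insDer_self (hσ : CP.fix σ = 0) (hi : i ≤ n) :
    dInd (insDer σ i) i = nInd σ i := by
  unfold dInd nInd
  by_cases h : i < n
  · rw [letter_insDer_ge σ i i le_rfl h, letter_insDer_self σ i hi]
    have := letter_ne_of_fix σ hσ h
    unfold CP.gtLetter shiftLetter
    dsimp only
    split_ifs <;> omega
  · rw [if_neg (by omega), if_neg (by omega)]

/-- Any weighted descent count of `⟨σ,i⟩`, in terms of the indicators of `σ`: the descents left of
slot `i` stay, those right of it move by one, and the descent in slot `i` itself is replaced by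
the comparisons of the inserted letter with its two neighbours. -/
lemma sum_dInd_insDer (hσ : CP.fix σ = 0) (hi : i ≤ n) (w : ℕ → ℕ) :
    ∑ j ∈ range (n + 1), dInd (insDer σ i) j * w (j + 1) + prevInd (dInd σ) i * w i +
        ∑ j ∈ Ico i n, dInd σ j * w (j + 1) =
      ∑ j ∈ range n, dInd σ j * w (j + 1) + prevInd (fun k => 1 - nInd σ k) i * w i +
        nInd σ i * w (i + 1) + ∑ j ∈ Ico i n, dInd σ j * w (j + 2) := by
  have hR : ∑ j ∈ Ico (i + 1) (n + 1), dInd (insDer σ i) j * w (j + 1) =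
      ∑ j ∈ Ico i n, dInd σ j * w (j + 2) := by
    rw [← sum_Ico_add' _ i n 1]
    refine sum_congr rfl fun j hj => ?_
    rw [dInd_insDer_ge σ i j (mem_Ico.1 hj).1]
  have hL : ∑ j ∈ range i, dInd (insDer σ i) j * w (j + 1) + prevInd (dInd σ) i * w i =
      ∑ j ∈ range i, dInd σ j * w (j + 1) + prevInd (fun k => 1 - nInd σ k) i * w i := by
    cases i with
    | zero => simp [prevInd]
    | succ k =>
      rw [sum_range_succ, sum_range_succ, dInd_insDer_prev σ k hi]
      have : ∑ j ∈ range k, dInd (insDer σ (k + 1)) j * w (j + 1) =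
          ∑ j ∈ range k, dInd σ j * w (j + 1) := by
        refine sum_congr rfl fun j hj => ?_
        rw [dInd_insDer_lt σ (k + 1) hi j (by have := mem_range.1 hj; omega)]
      rw [this]
      simp only [prevInd]
      ring
  rw [← sum_range_add_sum_Ico _ (show i + 1 ≤ n + 1 by omega), hR, sum_range_succ,
    dInd_insDer_self σ i hσ hi, ← sum_range_add_sum_Ico (fun j => dInd σ j * w (j + 1)) hi]
  linarith

lemma des_insDer (hσ : CP.fix σ = 0) (hi : i ≤ n) :
    CP.des (insDer σ i) + prevInd (dInd σ) i =
      CP.des σ + prevInd (fun k => 1 - nInd σ k) i + nInd σ i := by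
  have := sum_dInd_insDer σ i hσ hi (fun _ => 1)
  simp only [mul_one] at this
  rw [des_eq_sum, des_eq_sum]
  omega

lemma maj_insDer (hσ : CP.fix σ = 0) (hi : i ≤ n) :
    CP.maj (insDer σ i) + prevInd (dInd σ) i * i =
      CP.maj σ + prevInd (fun k => 1 - nInd σ k) i * i + nInd σ i * i +
        (nInd σ i + ∑ j ∈ Ico i n, dInd σ j) := by
  have := sum_dInd_insDer σ i hσ hi (fun j => j)
  have h2 : ∑ j ∈ Ico i n, dInd σ j * (j + 2) =
      ∑ j ∈ Ico i n, dInd σ j * (j + 1) + ∑ j ∈ Ico i n, dInd σ j := by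
    rw [← sum_add_distrib]
    exact sum_congr rfl fun j _ => by ring
  rw [maj_eq_sum, maj_eq_sum]
  linarith

/-! ### Green slots -/

/-- The change in the number of descents, `[x_i exceeds] + [x_{i+1} does not exceed] - [descent]`,
is `0` at a green slot and `1` at a red one. -/
lemma green_balance (hσ : CP.fix σ = 0) (hi : i ≤ n) :
    (if isGreen σ i then 1 else 0) + prevInd (fun k => 1 - nInd σ k) i + nInd σ i =
      1 + prevInd (dInd σ) i := by
  have h := des_insDer σ i hσ hi
  cases i with
  | zero =>
    have := nInd_le_one σ 0
    simp only [prevInd] at h ⊢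
    split_ifs with hg <;> unfold isGreen at hg <;> omega
  | succ k =>
    have h1 := nInd_le_one σ k
    have h2 := nInd_le_one σ (k + 1)
    have h3 := ind_bounds σ hσ k
    simp only [prevInd] at h ⊢
    split_ifs with hg <;> unfold isGreen at hg <;> omega

/-- The number of green slots to the right of slot `i`, by telescoping `green_balance`. -/
lemma sum_green_right (hσ : CP.fix σ = 0) (hi : i ≤ n) :
    ∑ j ∈ Ico (i + 1) (n + 1), (if isGreen σ j then 1 else 0) =
      nInd σ i + ∑ j ∈ Ico i n, dInd σ j := by
  induction hi using Nat.decreasingInduction with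
  | self => simp [nInd_of_ge σ le_rfl]
  | of_succ k hk ih =>
    rw [sum_eq_sum_Ico_succ_bot (by omega), ih, sum_eq_sum_Ico_succ_bot hk]
    have h1 := green_balance σ (k + 1) hσ hk
    have h2 := nInd_le_one σ k
    simp only [prevInd] at h1
    omega

lemma card_green_right (hσ : CP.fix σ = 0) (hi : i ≤ n) :
    ((range (n + 1)).filter fun j => i < j ∧ isGreen σ j).card =
      nInd σ i + ∑ j ∈ Ico i n, dInd σ j := by
  rw [← sum_green_right σ i hσ hi, ← card_filter]
  congr 1
  ext j
  simp only [mem_filter, mem_range, mem_Ico]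
  grind

/-- At a red slot `i`, the slots left of `i` together with the green slots right of `i` are
counted by the total number of green slots plus the number of red slots left of `i`. -/
lemma card_green_add_card_red (hi : i ≤ n) (hr : ¬ isGreen σ i) :
    ((range (n + 1)).filter fun j => isGreen σ j).card +
        ((range (n + 1)).filter fun j => j < i ∧ ¬ isGreen σ j).card =
      i + ((range (n + 1)).filter fun j => i < j ∧ isGreen σ j).card := by
  have h1 : (range (n + 1)).filter (fun j => isGreen σ j) =
      (range i).filter (fun j => isGreen σ j) ∪
        (range (n + 1)).filter (fun j => i < j ∧ isGreen σ j) := by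
    ext j
    simp only [mem_filter, mem_range, mem_union]
    grind
  have h2 : (range (n + 1)).filter (fun j => j < i ∧ ¬ isGreen σ j) =
      (range i).filter (fun j => ¬ isGreen σ j) := by
    ext j
    simp only [mem_filter, mem_range]
    grind
  have h3 : Disjoint ((range i).filter (fun j => isGreen σ j))
      ((range (n + 1)).filter (fun j => i < j ∧ isGreen σ j)) := by
    rw [disjoint_left]
    intro j
    simp only [mem_filter, mem_range]
    grind
  have h4 := card_filter_add_card_filter_not (s := range i) (fun j => isGreen σ j)
  rw [card_range] at h4
  rw [h1, card_union_of_disjoint h3, h2]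
  omega

end Derangement

end Proof

/-- For a colored derangement `σ ∈ D_{ℓ,n}` and a slot `0 ≤ i ≤ n`,
`maj ⟨σ,i⟩ = maj σ + g_i` where `g_i` is the value of the `i`-th slot. -/
theorem maj_insert_eq_maj_add_slotVal (ℓ n : ℕ) [NeZero ℓ] (σ : CP ℓ n)
    (hσ : CP.fix σ = 0) (i : ℕ) (hi : i ≤ n) :
    CP.maj (insDer σ i) = CP.maj σ + slotVal σ i := by
  have hmaj := maj_insDer σ i hσ hi
  have hbal := green_balance σ i hσ hi
  have hright := card_green_right σ i hσ hi
  unfold slotVal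
  by_cases hg : isGreen σ i
  · rw [if_pos hg] at hbal ⊢
    rw [hright]
    have h := congrArg (· * i) hbal
    simp only [add_mul, one_mul] at h
    omega
  · rw [if_neg hg] at hbal ⊢
    rw [card_green_add_card_red σ i hi hg, hright]
    have h := congrArg (· * i) hbal
    simp only [add_mul, one_mul, zero_mul] at h
    omega
end

section
/- Fix integers ℓ≥1 and n≥1, and let 0≤m≤n−1. Then Σ_{σ ∈ G_{ℓ,n}^{m+1}} q^{fmaf σ} x^{fix σ} = Σ_{σ ∈ G_{ℓ,n}^{m}} q^{fmaf σ} x^{fix σ} + x·q^{ℓ(n−m−1)} · Σ_{σ ∈ G_{ℓ,n−1}^{m}} q^{fmaf σ} x^{fix σ}. -/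
/-!
The colored permutations counted on the left but not in the first sum on the right are those having
`p = n - m - 1` (0-based) as their smallest fixed point. Deleting that fixed point and standardizing
is a bijection onto the `τ` of size `n - 1` without fixed point below `p`; its inverse is
`CP.insFix`. Insertion of `p` leaves the derangement part and the colors alone
(`CP.maj_Der_insFix`, `CP.col_insFix`), adds one fixed point, and shifts all `k` old fixed points up
by one. Hence `∑ (i_j - j)` grows by exactly `p`: the old fixed points grow by one each, but so do
their indices (`CP.maf_insFix`). So `fmaf` grows by `ℓ * p` and `fix` by one, which is the factor
`x q^{ℓ(n-m-1)}`.
-/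

open Finset

namespace CP

variable {ℓ n : ℕ}

/-- The major index of `Der σ` can be read off from the letters of `σ` at the nonfixed positions,
listed increasingly by `e`: passing to ranks does not change any comparison of two letters. -/
lemma maj_Der_eq (σ : CP ℓ n) (d : ℕ) (hd : d = n - fix σ) (e : Fin d ↪o Fin n)
    (he : ∀ i, e i ∈ (fixSet σ)ᶜ) :
    maj (Der σ) = ∑ i ∈ range (d - 1), if ∃ (h : i < d) (h' : i + 1 < d),
      gtLetter ((σ.2 (e ⟨i, h⟩) : ℕ), (σ.1 (e ⟨i, h⟩) : ℕ))
        ((σ.2 (e ⟨i + 1, h'⟩) : ℕ), (σ.1 (e ⟨i + 1, h'⟩) : ℕ)) then i + 1 else 0 := by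
  subst hd
  have hu : ∀ i, (((fixSet σ)ᶜ).orderIsoOfFin (card_nonfix σ) i : Fin n) = e i := by
    intro i
    have := Finset.orderEmbOfFin_unique (card_nonfix σ) he e.strictMono
    rw [Finset.coe_orderIsoOfFin_apply, ← this]
  unfold maj desSet
  rw [Finset.sum_filter]
  refine Finset.sum_congr rfl fun i hi => ?_
  rw [Finset.mem_range] at hi
  have h1 : i < n - fix σ := by omega
  have h2 : i + 1 < n - fix σ := by omega
  have hlt : ∀ a b : Fin (n - fix σ), (Der σ).1 a < (Der σ).1 b ↔ σ.1 (e a) < σ.1 (e b) := by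
    intro a b
    simp [Der, derMid, hu]
  have hc : ∀ a, (Der σ).2 a = σ.2 (e a) := by
    intro a
    simp only [Der, hu]
  have hl := hlt ⟨i + 1, h2⟩ ⟨i, h1⟩
  rw [Fin.lt_def, Fin.lt_def] at hl
  refine if_congr ?_ rfl rfl
  simp only [letter, h1, h2, dif_pos, gtLetter, hc, hl, exists_true_left]

/-- Insertion of a fixed point at position `p`: letters with position or value at least `p` are
shifted up by one, and the new letter `p` receives color `1 = ζ^0`. -/
def insFix (hℓ : 1 ≤ ℓ) (p : Fin (n + 1)) (τ : CP ℓ n) : CP ℓ (n + 1) :=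
  ((finSuccEquiv' p).trans (τ.1.optionCongr.trans (finSuccEquiv' p).symm),
    p.insertNth (α := fun _ => Fin ℓ) ⟨0, hℓ⟩ τ.2)

section
variable (hℓ : 1 ≤ ℓ) (p : Fin (n + 1)) (τ : CP ℓ n)

lemma insFix_fst_self : (insFix hℓ p τ).1 p = p := by simp [insFix]

lemma insFix_fst_succAbove (j : Fin n) :
    (insFix hℓ p τ).1 (p.succAbove j) = p.succAbove (τ.1 j) := by simp [insFix]

lemma insFix_snd_self : ((insFix hℓ p τ).2 p : ℕ) = 0 := by simp [insFix]

lemma insFix_snd_succAbove (j : Fin n) :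
    (insFix hℓ p τ).2 (p.succAbove j) = τ.2 j := by simp [insFix]

lemma self_mem_fixSet_insFix : p ∈ fixSet (insFix hℓ p τ) := by
  simp [fixSet, insFix_fst_self, insFix_snd_self]

lemma succAbove_mem_fixSet_insFix (j : Fin n) :
    p.succAbove j ∈ fixSet (insFix hℓ p τ) ↔ j ∈ fixSet τ := by
  simp [fixSet, insFix_fst_succAbove, insFix_snd_succAbove]

lemma fixSet_insFix :
    fixSet (insFix hℓ p τ) = insert p ((fixSet τ).map p.succAboveEmb) := by
  ext i
  refine p.succAboveCases ?_ (fun j => ?_) i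
  · simp [self_mem_fixSet_insFix]
  · simp [succAbove_mem_fixSet_insFix, Fin.succAbove_ne]

lemma fix_insFix : fix (insFix hℓ p τ) = fix τ + 1 := by
  rw [fix, fixSet_insFix, Finset.card_insert_of_notMem (by simp [Fin.succAbove_ne]),
    Finset.card_map, fix]

lemma col_insFix : col (insFix hℓ p τ) = col τ := by
  rw [col, Fin.sum_univ_succAbove _ p, insFix_snd_self, zero_add, col]
  simp only [insFix_snd_succAbove]

/-- Inserting a fixed point does not change the derangement part, hence not its major index. -/
lemma maj_Der_insFix : maj (Der (insFix hℓ p τ)) = maj (Der τ) := by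
  set e := ((fixSet τ)ᶜ).orderEmbOfFin (card_nonfix τ) with he
  have hmem : ∀ i, e i ∈ (fixSet τ)ᶜ := fun i => Finset.orderEmbOfFin_mem _ _ i
  rw [maj_Der_eq τ _ rfl e hmem,
    maj_Der_eq (insFix hℓ p τ) (n - fix τ) (by rw [fix_insFix]; omega)
      (e.trans p.succAboveOrderEmb) (fun i => ?_)]
  · refine Finset.sum_congr rfl fun i _ => if_congr ?_ rfl rfl
    have hlt : ∀ a b : Fin n, (p.succAbove a : ℕ) < (p.succAbove b : ℕ) ↔ (a : ℕ) < b := by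
      intro a b
      rw [← Fin.lt_def, ← Fin.lt_def, Fin.succAbove_lt_succAbove_iff]
    simp only [RelEmbedding.coe_trans, Function.comp_apply, Fin.succAboveOrderEmb_apply,
      insFix_fst_succAbove, insFix_snd_succAbove, gtLetter, hlt]
  · have := hmem i
    simpa [succAbove_mem_fixSet_insFix] using this

end

lemma choose_card_le_sum (s : Finset ℕ) : s.card.choose 2 ≤ ∑ i ∈ s, i := by
  induction s using Finset.induction_on_max with
  | empty => simp
  | insert a s ha ih =>
    have hn : a ∉ s := fun h => lt_irrefl _ (ha a h)
    have hc : s.card ≤ a := by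
      simpa using Finset.card_le_card (fun x hx => Finset.mem_range.mpr (ha x hx) : s ⊆ range a)
    rw [Finset.card_insert_of_notMem hn, Finset.sum_insert hn, Nat.choose_succ_succ' s.card 1,
      Nat.choose_one_right, one_add_one_eq_two]
    omega

/-- The subtraction in the definition of `maf` does not truncate. -/
lemma choose_fix_le (σ : CP ℓ n) : (fix σ).choose 2 ≤ ∑ i ∈ fixSet σ, (i : ℕ) := by
  simpa [fix] using choose_card_le_sum ((fixSet σ).map Fin.valEmbedding)

/-- If every fixed point of `τ` lies at a position at least `p`, all of them are shifted by the
insertion of `p`; with `k = fix τ` this adds `p + k` to the sum of the fixed points, and `k` is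
absorbed by `(k + 1).choose 2 - k.choose 2`. -/
lemma maf_insFix (hℓ : 1 ≤ ℓ) (p : Fin (n + 1)) (τ : CP ℓ n)
    (hτ : ∀ j ∈ fixSet τ, (p : ℕ) ≤ j) : maf (insFix hℓ p τ) = maf τ + p := by
  have hsum : ∑ i ∈ fixSet (insFix hℓ p τ), (i : ℕ) = p + (∑ i ∈ fixSet τ, (i : ℕ) + fix τ) := by
    rw [fixSet_insFix, Finset.sum_insert (by simp [Fin.succAbove_ne]), Finset.sum_map, fix,
      Finset.card_eq_sum_ones, ← Finset.sum_add_distrib]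
    congr 1
    refine Finset.sum_congr rfl fun j hj => ?_
    rw [Fin.coe_succAboveEmb,
      Fin.succAbove_of_le_castSucc _ _ (by simpa [Fin.le_def] using hτ j hj), Fin.val_succ]
  have := choose_fix_le τ
  rw [maf, maf, maj_Der_insFix, hsum, fix_insFix, Nat.choose_succ_succ' (fix τ) 1,
    Nat.choose_one_right, one_add_one_eq_two]
  omega

lemma fmaf_insFix (hℓ : 1 ≤ ℓ) (p : Fin (n + 1)) (τ : CP ℓ n)
    (hτ : ∀ j ∈ fixSet τ, (p : ℕ) ≤ j) :
    fmaf (insFix hℓ p τ) = ℓ * p + fmaf τ := by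
  rw [fmaf, fmaf, maf_insFix hℓ p τ hτ, col_insFix]
  ring

lemma insFix_injective (hℓ : 1 ≤ ℓ) (p : Fin (n + 1)) :
    Function.Injective (insFix hℓ p : CP ℓ n → CP ℓ (n + 1)) := by
  intro τ τ' h
  refine Prod.ext (Equiv.ext fun j => ?_) (funext fun j => ?_)
  · apply p.succAbove_right_injective
    rw [← insFix_fst_succAbove hℓ, h, insFix_fst_succAbove]
  · rw [← insFix_snd_succAbove hℓ p, h, insFix_snd_succAbove]

lemma exists_insFix_eq (hℓ : 1 ≤ ℓ) (p : Fin (n + 1)) (σ : CP ℓ (n + 1))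
    (hp : p ∈ fixSet σ) : ∃ τ, insFix hℓ p τ = σ := by
  simp only [fixSet, Finset.mem_filter, Finset.mem_univ, true_and] at hp
  refine ⟨(((finSuccEquiv' p).symm.trans (σ.1.trans (finSuccEquiv' p))).removeNone,
    fun j => σ.2 (p.succAbove j)), Prod.ext ?_ ?_⟩
  · ext i : 1
    simp [insFix, map_equiv_removeNone, hp.1]
  · funext i
    refine p.succAboveCases ?_ (fun j => ?_) i
    · exact Fin.ext ((insFix_snd_self _ _ _).trans hp.2.symm)
    · exact insFix_snd_succAbove _ _ _ _

end CP

open MvPolynomial in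
/-- With `G_{ℓ,n}^m = {σ ∈ G_{ℓ,n} : σ(i) ≠ i for all i ≤ n−m}`,
`Σ_{σ ∈ G_{ℓ,n}^{m+1}} q^{fmaf σ} x^{fix σ}
 = Σ_{σ ∈ G_{ℓ,n}^{m}} q^{fmaf σ} x^{fix σ}
   + x·q^{ℓ(n−m−1)} Σ_{σ ∈ G_{ℓ,n−1}^{m}} q^{fmaf σ} x^{fix σ}`. -/
theorem fmaf_fix_sum_recurrence (ℓ n : ℕ) (hℓ : 1 ≤ ℓ) (hn : 1 ≤ n)
    (m : ℕ) (hm : m ≤ n - 1) :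
    (∑ σ ∈ (univ : Finset (CP ℓ n)).filter
        (fun σ => ∀ i : Fin n, (i : ℕ) < n - (m + 1) → ¬(σ.1 i = i ∧ (σ.2 i : ℕ) = 0)),
      (X 0 : MvPolynomial (Fin 2) ℤ) ^ CP.fmaf σ * (X 1) ^ CP.fix σ) =
    (∑ σ ∈ (univ : Finset (CP ℓ n)).filter
        (fun σ => ∀ i : Fin n, (i : ℕ) < n - m → ¬(σ.1 i = i ∧ (σ.2 i : ℕ) = 0)),
      (X 0 : MvPolynomial (Fin 2) ℤ) ^ CP.fmaf σ * (X 1) ^ CP.fix σ) +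
    (X 1) * (X 0 : MvPolynomial (Fin 2) ℤ) ^ (ℓ * (n - m - 1)) *
      (∑ σ ∈ (univ : Finset (CP ℓ (n - 1))).filter
          (fun σ => ∀ i : Fin (n - 1), (i : ℕ) < (n - 1) - m → ¬(σ.1 i = i ∧ (σ.2 i : ℕ) = 0)),
        (X 0 : MvPolynomial (Fin 2) ℤ) ^ CP.fmaf σ * (X 1) ^ CP.fix σ) := by
  obtain ⟨n, rfl⟩ : ∃ k, n = k + 1 := ⟨n - 1, by omega⟩
  rw [Nat.add_sub_cancel] at hm
  obtain ⟨p, hp⟩ : ∃ p : Fin (n + 1), (p : ℕ) = n - m := ⟨⟨n - m, by omega⟩, rfl⟩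
  have e1 : n + 1 - (m + 1) = p := by omega
  have e2 : n + 1 - m = p + 1 := by omega
  have e3 : n + 1 - 1 - m = p := by omega
  rw [e1, e2, e3, Nat.add_sub_cancel]
  rw [← Finset.sum_filter_add_sum_filter_not _ (fun σ : CP ℓ (n + 1) => p ∉ CP.fixSet σ)]
  congr 1
  · refine Finset.sum_congr ?_ fun _ _ => rfl
    ext σ
    simp only [Finset.mem_filter, Finset.mem_univ, true_and, CP.fixSet]
    constructor
    · rintro ⟨h1, h2⟩ i hi
      rcases Nat.lt_succ_iff_lt_or_eq.mp hi with h | h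
      · exact h1 i h
      · rwa [Fin.ext h]
    · exact fun h => ⟨fun i hi => h i (by omega), h p (by omega)⟩
  · rw [Finset.mul_sum]
    symm
    refine Finset.sum_bij (fun τ _ => CP.insFix hℓ p τ) ?_ ?_ ?_ ?_
    · intro τ hτ
      simp only [Finset.mem_filter, Finset.mem_univ, true_and, not_not] at hτ ⊢
      refine ⟨fun i hi hfix => ?_, CP.self_mem_fixSet_insFix hℓ p τ⟩
      obtain ⟨j, rfl⟩ := Fin.exists_succAbove_eq (x := i) (y := p) (by rintro rfl; omega)
      have hj : (j : ℕ) < p := by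
        have := Fin.succAbove_lt_iff_castSucc_lt p j
        simp only [Fin.lt_def, Fin.val_castSucc] at this
        exact this.mp hi
      have := (CP.succAbove_mem_fixSet_insFix hℓ p τ j).mp (by simpa [CP.fixSet] using hfix)
      exact hτ j hj (by simpa [CP.fixSet] using this)
    · exact fun _ _ _ _ h => CP.insFix_injective hℓ p h
    · intro σ hσ
      simp only [Finset.mem_filter, Finset.mem_univ, true_and, not_not] at hσ
      obtain ⟨τ, rfl⟩ := CP.exists_insFix_eq hℓ p σ hσ.2
      refine ⟨τ, ?_, rfl⟩
      simp only [Finset.mem_filter, Finset.mem_univ, true_and]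
      intro j hj hfix
      have := (CP.succAbove_mem_fixSet_insFix hℓ p τ j).mpr (by simpa [CP.fixSet] using hfix)
      refine hσ.1 (p.succAbove j) ?_ (by simpa [CP.fixSet] using this)
      rw [← Fin.lt_def, Fin.succAbove_lt_iff_castSucc_lt]
      exact hj
    · intro τ hτ
      simp only [Finset.mem_filter, Finset.mem_univ, true_and] at hτ
      rw [CP.fmaf_insFix hℓ p τ, CP.fix_insFix]
      · ring
      · intro j hj
        by_contra hlt
        exact hτ j (by omega) (by simpa [CP.fixSet] using hj)
end

section
/- Let σ = x_1 x_2 ⋯ x_n ∈ S_n with the conventions x_0 = x_{n+1} = +∞, let (i,i+1) be the j-th slot of σ, let t_i = des(x_{i+1}⋯x_n), and let d_j be the number of descent places of ⟨σ,j⟩ that are ≥ i+1 (the descents of ⟨σ,j⟩ to the right of the inserted letter). Then d_j = t_i if (x_i > x_{i+1} > i) or (x_i < i < x_{i+1}) or (i < x_i < x_{i+1}), and d_j = t_i + 1 if (i > x_i > x_{i+1}) or (x_i > i ≥ x_{i+1}) or (x_i < x_{i+1} ≤ i). -/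
/-!
Whether the inserted letter `i+1` is followed by a descent depends only on `x_{i+1}`: it is
followed by `x_{i+1}'`, which is smaller than `i+1` exactly when `x_{i+1} ≤ i`
(`shiftInf_lt_succ_iff`). The remaining places to the right of the inserted letter compare
`x_p'` with `x_{p+1}'` for `i+1 ≤ p ≤ n-1`, and `x ↦ x'` is strictly increasing
(`shiftInf_strictMono`), so they contribute exactly `t_i` descents. Hence `d_j` is `t_i + 1`
if `x_{i+1} ≤ i` and `t_i` otherwise (`card_descents_insWordInf`); the first three cases of
the theorem force `x_{i+1} > i`, the last three force `x_{i+1} ≤ i`.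
-/

open Finset

/-- The word of `σ ∈ S_n` with the conventions `x_0 = x_{n+1} = +∞`: `wordInf σ p` is the
(1-based) letter `x_p` for `1 ≤ p ≤ n`, and `+∞` otherwise. -/
def wordInf {n : ℕ} (σ : Equiv.Perm (Fin n)) (p : ℕ) : ℕ∞ :=
  if h : 1 ≤ p ∧ p ≤ n then (((σ ⟨p - 1, by omega⟩ : Fin n) : ℕ) + 1 : ℕ) else ⊤

/-- The shift `x ↦ x'` used when inserting the fixed point `i+1`:
`x' = x` if `x ≤ i`, `x' = x+1` if `x > i`. -/
def shiftInf (i : ℕ) (v : ℕ∞) : ℕ∞ := if v ≤ (i : ℕ∞) then v else v + 1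

/-- The word of `⟨σ,j⟩ ∈ S_{n+1}`, the permutation obtained by inserting the fixed point
`i+1` into the `j`-th slot `(i,i+1)` of `σ`:
`⟨σ,j⟩ = x_1' ⋯ x_i' (i+1) x_{i+1}' ⋯ x_n'` (again with `+∞` outside `[1,n+1]`). -/
def insWordInf {n : ℕ} (σ : Equiv.Perm (Fin n)) (i : ℕ) (p : ℕ) : ℕ∞ :=
  if p < i + 1 then shiftInf i (wordInf σ p)
  else if p = i + 1 then ((i + 1 : ℕ) : ℕ∞)
  else shiftInf i (wordInf σ (p - 1))

theorem shiftInf_strictMono (i : ℕ) : StrictMono (shiftInf i) := by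
  intro a b hab
  unfold shiftInf
  split_ifs with ha hb hb
  · exact hab
  · exact hab.trans_le le_self_add
  · exact absurd (hab.le.trans hb) ha
  · exact (ENat.add_lt_add_iff_right ENat.one_ne_top).2 hab

theorem shiftInf_lt_succ_iff (i : ℕ) (v : ℕ∞) :
    shiftInf i v < ((i + 1 : ℕ) : ℕ∞) ↔ v ≤ (i : ℕ∞) := by
  unfold shiftInf
  split_ifs with h
  · simp only [h, iff_true]
    exact h.trans_lt (by exact_mod_cast Nat.lt_succ_self i)
  · simp only [h, iff_false, not_lt]
    push_cast
    gcongr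
    exact (not_le.1 h).le

theorem insWordInf_succ {n : ℕ} (σ : Equiv.Perm (Fin n)) {i p : ℕ} (hp : i + 1 ≤ p) :
    insWordInf σ i (p + 1) = shiftInf i (wordInf σ p) := by
  unfold insWordInf
  rw [if_neg (by omega), if_neg (by omega), Nat.add_sub_cancel]

theorem insWordInf_self {n : ℕ} (σ : Equiv.Perm (Fin n)) (i : ℕ) :
    insWordInf σ i (i + 1) = ((i + 1 : ℕ) : ℕ∞) := by
  simp [insWordInf]

/-- The number of descents weakly to the right of the inserted letter, for any `i ≤ n`,
whether or not `(i,i+1)` is a slot. -/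
theorem card_descents_insWordInf {n : ℕ} (σ : Equiv.Perm (Fin n)) {i : ℕ} (hi : i ≤ n) :
    ((Finset.Icc (i+1) n).filter fun p => insWordInf σ i (p+1) < insWordInf σ i p).card =
      ((Finset.Icc (i+1) (n-1)).filter fun p => wordInf σ (p+1) < wordInf σ p).card +
        if wordInf σ (i+1) ≤ (i : ℕ∞) then 1 else 0 := by
  rcases hi.eq_or_lt with rfl | hlt
  · -- Nothing follows the inserted letter: both ranges are empty and `x_{n+1} = +∞`.
    have hw : wordInf σ (i + 1) = ⊤ := by simp [wordInf]
    rw [hw, Finset.Icc_eq_empty (by omega), Finset.Icc_eq_empty (by omega)]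
    simp
  · have hIcc : Finset.Icc (i+1) n =
        insert (i+1) ((Finset.Icc (i+1) (n-1)).map (addRightEmbedding 1)) := by
      rw [Finset.map_add_right_Icc]
      ext p
      simp only [Finset.mem_insert, Finset.mem_Icc]
      omega
    have htail : (((Finset.Icc (i+1) (n-1)).map (addRightEmbedding 1)).filter
        fun p => insWordInf σ i (p+1) < insWordInf σ i p).card =
        ((Finset.Icc (i+1) (n-1)).filter fun p => wordInf σ (p+1) < wordInf σ p).card := by
      rw [Finset.filter_map, Finset.card_map]
      congr 1
      refine Finset.filter_congr fun p hp => ?_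
      have hp' := (Finset.mem_Icc.1 hp).1
      simp only [Function.comp_apply, addRightEmbedding_apply]
      rw [insWordInf_succ σ (p := p + 1) (by omega), insWordInf_succ σ hp']
      exact (shiftInf_strictMono i).lt_iff_lt
    have hhead : insWordInf σ i (i+1+1) < insWordInf σ i (i+1) ↔
        wordInf σ (i+1) ≤ (i : ℕ∞) := by
      rw [insWordInf_succ σ le_rfl, insWordInf_self, shiftInf_lt_succ_iff]
    rw [hIcc, Finset.filter_insert, ← htail]
    by_cases h : wordInf σ (i+1) ≤ (i : ℕ∞)
    · rw [if_pos (hhead.2 h), if_pos h, Finset.card_insert_of_notMem]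
      simp
    · rw [if_neg (mt hhead.1 h), if_neg h, add_zero]

/-- Lemma on the number of descents to the right of an inserted fixed
point. Let `(i,i+1)` be the `j`-th slot of `σ ∈ S_n`, `t_i = des(x_{i+1}⋯x_n)` and `d_j`
the number of descent places of `⟨σ,j⟩` that are `≥ i+1`. Then `d_j = t_i` in the cases
`x_i > x_{i+1} > i`, `x_i < i < x_{i+1}`, `i < x_i < x_{i+1}`, and `d_j = t_i + 1` in the
cases `i > x_i > x_{i+1}`, `x_i > i ≥ x_{i+1}`, `x_i < x_{i+1} ≤ i`. -/
theorem descents_right_of_inserted_fixed_point (n : ℕ) (σ : Equiv.Perm (Fin n))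
    (i j : ℕ) (hi : i ≤ n)
    (hslot : wordInf σ i ≠ (i : ℕ∞) ∧
      ((Finset.univ.filter fun p : Fin n => σ p = p ∧ (p : ℕ) + 1 < i).card) + j = i) :
    (((i : ℕ∞) < wordInf σ (i+1) ∧ wordInf σ (i+1) < wordInf σ i) ∨
     (wordInf σ i < (i : ℕ∞) ∧ (i : ℕ∞) < wordInf σ (i+1)) ∨
     ((i : ℕ∞) < wordInf σ i ∧ wordInf σ i < wordInf σ (i+1)) →
      ((Finset.Icc (i+1) n).filter fun p => insWordInf σ i (p+1) < insWordInf σ i p).card =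
      ((Finset.Icc (i+1) (n-1)).filter fun p => wordInf σ (p+1) < wordInf σ p).card) ∧
    ((wordInf σ (i+1) < wordInf σ i ∧ wordInf σ i < (i : ℕ∞)) ∨
     ((i : ℕ∞) < wordInf σ i ∧ wordInf σ (i+1) ≤ (i : ℕ∞)) ∨
     (wordInf σ i < wordInf σ (i+1) ∧ wordInf σ (i+1) ≤ (i : ℕ∞)) →
      ((Finset.Icc (i+1) n).filter fun p => insWordInf σ i (p+1) < insWordInf σ i p).card =
      ((Finset.Icc (i+1) (n-1)).filter fun p => wordInf σ (p+1) < wordInf σ p).card + 1) := by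
  rw [card_descents_insWordInf σ hi]
  constructor
  · intro h
    have hgt : (i : ℕ∞) < wordInf σ (i+1) := by
      rcases h with h | h | h
      · exact h.1
      · exact h.2
      · exact h.1.trans h.2
    rw [if_neg (not_le.2 hgt), Nat.add_zero]
  · intro h
    have hle : wordInf σ (i+1) ≤ (i : ℕ∞) := by
      rcases h with h | h | h
      · exact (h.1.trans h.2).le
      · exact h.2
      · exact h.2
    rw [if_pos hle]
end

section
/- Let w_1 and w_2 be nonempty words over the nonnegative integers with Last(w_1) > 0 and zero(w_2) = 0, set a = Last(w_1), b = First(w_2), ν = pil(w_1), t = des(w_2), and let μ = w_1 0^r w_2 with r ≥ 0, where μ lies in a shuffle class Sh(0^z v). Then, with I_w defined by F(w) = [Pos(w), I_w]: if zero(w_1) ≠ 0, then I_μ = (t^{[r]}, I_{w_1}+t+1) when a > b; I_μ = I_{w_1}+t when a < b and r = 0; and I_μ = (t^{[r−1]}, I_{w_1}+t+1, ν+t) when a < b and r > 0. If zero(w_1) = 0, then I_μ is the empty sequence when r = 0; I_μ = (t^{[r]}) when r > 0 and a > b; and I_μ = (t^{[r−1]}, ν+t) when r > 0 and a < b. -/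
/-!
The recursive clause of `FH` is valid for every word `w ++ [b]`, also when it is weakly
increasing (`FH_concat`). Read letter by letter it has simple effects on `I_w = Iseq (FH w)`.

* Appending a positive letter `d` after a positive letter `c` leaves `I` unchanged if `c ≤ d`,
  and applies `δ` if `d < c`. On a word ending in a positive letter, `δ` adds one to every entry
  of `I`, since each zero jumps over exactly one pillar (`IseqAux_deltaAux`). Hence appending a
  positive word `s` after `c` adds `desL (c :: s)` to every entry (`Iseq_FH_append`).
* Appending `0^(k+1)` to `w` ending in a positive letter gives
  `FH (w 0^(k+1)) = 0^k δ(FH w) 0` (`FH_append_zeros`): the first zero triggers `δ`, and each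
  further one triggers `γ`.

The first letter of `w₂` then either keeps the final `0` in place (`a ≤ b`) or moves it to the
front by `γ` (`b < a`), and the rest of `w₂` adds `desL w₂`. When `w₁` has no zero, neither has
`FH w₁`, so `I_{w₁}` is empty and the same formulas apply.
-/

/-! ### Words over the nonnegative integers: pillars, zeros, descents, and the coding
`w = [Pos(w), i_1, …, i_z]`. -/

/-- Number of descents of a word. -/
def desL : List ℕ → ℕ
  | a :: b :: t => (if b < a then 1 else 0) + desL (b :: t)
  | _ => 0

/-- The word of pillars (positive letters) of `w`, read from left to right. -/
def posW (w : List ℕ) : List ℕ := w.filter (fun x => x ≠ 0)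

/-- Number of pillars. -/
def pil (w : List ℕ) : ℕ := (posW w).length

/-- Number of zeros. -/
def zeroCount (w : List ℕ) : ℕ := w.count 0

/-- `IseqAux p w`: the numbers of pillars to the left of each zero of `w`, reading left to
right, `p` pillars having already been read. -/
def IseqAux : ℕ → List ℕ → List ℕ
  | _, [] => []
  | p, 0 :: t => p :: IseqAux p t
  | p, (x + 1) :: t => IseqAux (p + 1) t

/-- `Iseq w = (i_1, …, i_z)` where `i_k` is the number of pillars to the left of the `k`-th
zero of `w`; thus `w = [posW w, Iseq w]`. -/
def Iseq (w : List ℕ) : List ℕ := IseqAux 0 w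

/-! ### Foata–Han's second transformation `F` -/

/-- `δ`: move each positive letter occurring just after a 0-factor to the beginning of
that 0-factor. -/
def deltaAux : ℕ → List ℕ → List ℕ
  | z, [] => List.replicate z 0
  | z, 0 :: t => deltaAux (z + 1) t
  | z, (x + 1) :: t => (x + 1) :: (List.replicate z 0 ++ deltaAux 0 t)

def deltaFH (w : List ℕ) : List ℕ := deltaAux 0 w

/-- `γ`: add one letter `0` to the left and delete the rightmost letter (a `0`):
if `w = w''0` then `γ w = 0w''`. -/
def gammaFH (w : List ℕ) : List ℕ := 0 :: w.dropLast

/-- Foata–Han's second transformation `F = F₃` on words with nonnegative letters. -/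
def FH (w : List ℕ) : List ℕ :=
  if h : w.length ≤ 1 ∨ desL w = 0 then w
  else
    let b := w.getLastD 0
    let u := w.dropLast
    let r := (u.reverse.takeWhile (fun x => x == 0)).length
    let a := (u.reverse.dropWhile (fun x => x == 0)).headD 0
    if a ≤ b then FH u ++ [b]
    else if 1 ≤ r then gammaFH (FH u) ++ [b]
    else deltaFH (FH u) ++ [b]
termination_by w.length
decreasing_by all_goals
  (push_neg at h; simp only [u, List.length_dropLast]; omega)

/-! ### The recursive clause of `F` -/

/-- The last pillar of `w`, or `0` if there is none, computed as in the definition of `FH`. -/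
def lastPillar (w : List ℕ) : ℕ := (w.reverse.dropWhile (fun x => x == 0)).headD 0

/-- The number of zeros at the end of `w`, computed as in the definition of `FH`. -/
def trailingZeros (w : List ℕ) : ℕ := (w.reverse.takeWhile (fun x => x == 0)).length

lemma lastPillar_concat_zero (w : List ℕ) : lastPillar (w ++ [0]) = lastPillar w := by
  simp [lastPillar]

lemma lastPillar_concat_pos (w : List ℕ) (c : ℕ) (hc : 0 < c) : lastPillar (w ++ [c]) = c := by
  have : c ≠ 0 := by omega
  simp [lastPillar, this]

lemma trailingZeros_concat_zero (w : List ℕ) :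
    trailingZeros (w ++ [0]) = trailingZeros w + 1 := by
  simp [trailingZeros]

lemma trailingZeros_concat_pos (w : List ℕ) (c : ℕ) (hc : 0 < c) :
    trailingZeros (w ++ [c]) = 0 := by
  have : c ≠ 0 := by omega
  simp [trailingZeros, this]

lemma desL_concat_eq_zero (w : List ℕ) (b : ℕ) (h : desL (w ++ [b]) = 0) :
    desL w = 0 ∧ ∀ x ∈ w, x ≤ b := by
  induction w with
  | nil => simp [desL]
  | cons a w ih =>
    cases w with
    | nil =>
      simp only [List.cons_append, List.nil_append, desL] at h
      simp only [desL, List.mem_singleton, forall_eq, true_and]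
      split_ifs at h <;> omega
    | cons c w =>
      simp only [List.cons_append, desL, Nat.add_eq_zero_iff] at h ih ⊢
      obtain ⟨h1, h2⟩ := h
      obtain ⟨h3, h4⟩ := ih h2
      refine ⟨⟨h1, h3⟩, ?_⟩
      intro x hx
      rcases List.mem_cons.1 hx with rfl | hx
      · have := h4 c (by simp)
        split_ifs at h1
        omega
      · exact h4 x hx

lemma lastPillar_le (w : List ℕ) (b : ℕ) (h : ∀ x ∈ w, x ≤ b) : lastPillar w ≤ b := by
  induction w using List.reverseRecOn with
  | nil => simp [lastPillar]
  | append_singleton w c ih =>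
    rcases Nat.eq_zero_or_pos c with rfl | hc
    · rw [lastPillar_concat_zero]
      exact ih fun x hx => h x (by simp [hx])
    · rw [lastPillar_concat_pos _ _ hc]
      exact h c (by simp)

lemma FH_of_desL_eq_zero (w : List ℕ) (h : desL w = 0) : FH w = w := by
  rw [FH, dif_pos (Or.inr h)]

/-- The recursive clause of `FH` holds without exception: for a weakly increasing word the last
pillar is at most the next letter, so the clause agrees with the base case. -/
lemma FH_concat (w : List ℕ) (b : ℕ) :
    FH (w ++ [b]) = if lastPillar w ≤ b then FH w ++ [b]
      else if 1 ≤ trailingZeros w then gammaFH (FH w) ++ [b] else deltaFH (FH w) ++ [b] := by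
  by_cases hd : desL (w ++ [b]) = 0
  · obtain ⟨h1, h2⟩ := desL_concat_eq_zero w b hd
    rw [if_pos (lastPillar_le w b h2), FH_of_desL_eq_zero _ hd, FH_of_desL_eq_zero _ h1]
  · have hl : ¬ ((w ++ [b]).length ≤ 1 ∨ desL (w ++ [b]) = 0) := by
      rintro (h | h)
      · have : w = [] := by
          apply List.eq_nil_of_length_eq_zero
          simpa using h
        subst this
        exact hd (by simp [desL])
      · exact hd h
    rw [FH, dif_neg hl]
    simp only [List.getLastD_concat, List.dropLast_concat, lastPillar, trailingZeros]
    -- Only the decidability instances of the two conditionals differ.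
    congr 1

lemma FH_nil : FH [] = [] := FH_of_desL_eq_zero _ (by simp [desL])

lemma exists_FH_concat (w : List ℕ) (b : ℕ) : ∃ v, FH (w ++ [b]) = v ++ [b] := by
  rw [FH_concat]
  split_ifs <;> exact ⟨_, rfl⟩

lemma deltaAux_perm (z : ℕ) (w : List ℕ) : (deltaAux z w).Perm (List.replicate z 0 ++ w) := by
  induction w generalizing z with
  | nil => simp [deltaAux]
  | cons x w ih =>
    cases x with
    | zero =>
      rw [deltaAux]
      refine (ih (z + 1)).trans ?_
      rw [List.replicate_succ, List.cons_append]
      exact List.perm_middle.symm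
    | succ x =>
      rw [deltaAux]
      refine List.Perm.trans ?_ List.perm_middle.symm
      exact ((ih 0).append_left _).cons _

/-- `FH w` is a rearrangement of `w`; this weak form of preservation of shuffle classes yields
the invariance of `pil` and `zeroCount`. -/
lemma FH_perm (w : List ℕ) : (FH w).Perm w := by
  induction w using List.reverseRecOn with
  | nil => rw [FH_nil]
  | append_singleton w b ih =>
    rw [FH_concat]
    split_ifs with h1 h2
    · exact ih.append_right _
    · refine List.Perm.append_right _ ?_
      -- `w` ends in a zero, hence so does `FH w`, and `γ` merely moves that zero.
      rcases List.eq_nil_or_concat' w with rfl | ⟨w, c, rfl⟩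
      · simp [trailingZeros] at h2
      rcases Nat.eq_zero_or_pos c with rfl | hc
      · obtain ⟨v, hv⟩ := exists_FH_concat w 0
        rw [hv] at ih ⊢
        refine List.Perm.trans ?_ ih
        simpa [gammaFH] using (List.perm_append_singleton 0 v).symm
      · rw [trailingZeros_concat_pos _ _ hc] at h2
        omega
    · refine List.Perm.append_right _ (List.Perm.trans ?_ ih)
      simpa [deltaFH] using deltaAux_perm 0 (FH w)

/-! ### The coding `Iseq` and the effect of `δ` -/

lemma pil_perm {v w : List ℕ} (h : v.Perm w) : pil v = pil w := (h.filter _).length_eq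

lemma IseqAux_append (p : ℕ) (u v : List ℕ) :
    IseqAux p (u ++ v) = IseqAux p u ++ IseqAux (p + pil u) v := by
  induction u generalizing p with
  | nil => simp [IseqAux, pil, posW]
  | cons x u ih =>
    cases x with
    | zero => simp [IseqAux, ih, pil, posW]
    | succ x => simp [IseqAux, ih, pil, posW, Nat.add_assoc, Nat.add_comm]

lemma IseqAux_succ (p : ℕ) (w : List ℕ) : IseqAux (p + 1) w = (IseqAux p w).map (· + 1) := by
  induction w generalizing p with
  | nil => simp [IseqAux]
  | cons x w ih => cases x <;> simp [IseqAux, ih]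

lemma IseqAux_replicate (p k : ℕ) : IseqAux p (List.replicate k 0) = List.replicate k p := by
  induction k with
  | zero => simp [IseqAux]
  | succ k ih => simp [List.replicate_succ, IseqAux, ih]

lemma pil_replicate (k : ℕ) : pil (List.replicate k 0) = 0 := by simp [pil, posW]

lemma Iseq_concat_pos (w : List ℕ) (c : ℕ) (hc : 0 < c) : Iseq (w ++ [c]) = Iseq w := by
  obtain ⟨c, rfl⟩ := Nat.exists_eq_succ_of_ne_zero hc.ne'
  simp [Iseq, IseqAux_append, IseqAux]

lemma Iseq_eq_nil (w : List ℕ) (h : zeroCount w = 0) : Iseq w = [] := by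
  suffices ∀ p, IseqAux p w = [] from this 0
  rw [zeroCount, List.count_eq_zero] at h
  induction w with
  | nil => simp [IseqAux]
  | cons x w ih =>
    cases x with
    | zero => simp at h
    | succ x =>
      intro p
      rw [IseqAux]
      exact ih (fun h' => h (List.mem_cons_of_mem _ h')) _

/-- On words ending in a positive letter, `δ` moves every zero past exactly one pillar. The
parameter `z` counts the zeros already read and waiting for the next pillar. -/
lemma IseqAux_deltaAux (p z : ℕ) (w : List ℕ) (c : ℕ) :
    IseqAux p (deltaAux z (w ++ [c + 1])) =
      IseqAux (p + 1) (List.replicate z 0 ++ (w ++ [c + 1])) := by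
  induction w generalizing p z with
  | nil =>
    simp [deltaAux, IseqAux, IseqAux_append]
  | cons x w ih =>
    cases x with
    | zero =>
      rw [List.cons_append, deltaAux, ih, List.replicate_succ']
      simp
    | succ x =>
      rw [List.cons_append, deltaAux, IseqAux, IseqAux_append, IseqAux_append, ih, pil_replicate]
      simp [IseqAux]

lemma Iseq_deltaFH (w : List ℕ) (c : ℕ) (hc : 0 < c) :
    Iseq (deltaFH (FH (w ++ [c]))) = (Iseq (FH (w ++ [c]))).map (· + 1) := by
  obtain ⟨v, hv⟩ := exists_FH_concat w c
  obtain ⟨c, rfl⟩ := Nat.exists_eq_succ_of_ne_zero hc.ne'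
  rw [hv, Iseq, deltaFH, IseqAux_deltaAux, Iseq, IseqAux_succ]
  simp

/-! ### Appending letters -/

/-- Appending a positive word `s` after a positive letter `c` shifts `I` by the number of
descents encountered. -/
lemma Iseq_FH_append (w : List ℕ) (c : ℕ) (hc : 0 < c) (s : List ℕ) (hs : 0 ∉ s) :
    Iseq (FH (w ++ [c] ++ s)) = (Iseq (FH (w ++ [c]))).map (· + desL (c :: s)) := by
  induction s generalizing w c with
  | nil => simp [desL]
  | cons d s ih =>
    simp only [List.mem_cons, not_or] at hs
    have hd : 0 < d := Nat.pos_of_ne_zero (Ne.symm hs.1)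
    have e : w ++ [c] ++ d :: s = (w ++ [c]) ++ [d] ++ s := by simp
    rw [e, ih _ d hd hs.2, FH_concat, lastPillar_concat_pos _ _ hc,
      trailingZeros_concat_pos _ _ hc]
    by_cases h : c ≤ d
    · rw [if_pos h, Iseq_concat_pos _ _ hd]
      simp [desL, Nat.not_lt.2 h]
    · rw [if_neg h, if_neg (by omega), Iseq_concat_pos _ _ hd, Iseq_deltaFH _ _ hc]
      have h' : d < c := by omega
      simp [desL, h']

lemma lastPillar_append_zeros (w : List ℕ) (k : ℕ) :
    lastPillar (w ++ List.replicate k 0) = lastPillar w := by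
  induction k with
  | zero => simp
  | succ k ih => rw [List.replicate_succ', ← List.append_assoc, lastPillar_concat_zero, ih]

lemma one_le_trailingZeros (w : List ℕ) (k : ℕ) :
    1 ≤ trailingZeros (w ++ List.replicate (k + 1) 0) := by
  rw [List.replicate_succ', ← List.append_assoc, trailingZeros_concat_zero]
  omega

lemma FH_append_zeros (w : List ℕ) (a : ℕ) (ha : 0 < a) (k : ℕ) :
    FH (w ++ [a] ++ List.replicate (k + 1) 0) =
      List.replicate k 0 ++ deltaFH (FH (w ++ [a])) ++ [0] := by
  induction k with
  | zero =>
    rw [List.replicate_one, FH_concat, lastPillar_concat_pos _ _ ha,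
      trailingZeros_concat_pos _ _ ha, if_neg (by omega), if_neg (by omega)]
    simp
  | succ k ih =>
    rw [List.replicate_succ', ← List.append_assoc, FH_concat, lastPillar_append_zeros,
      lastPillar_concat_pos _ _ ha, if_neg (by omega), if_pos (one_le_trailingZeros _ _), ih]
    simp only [gammaFH, List.dropLast_concat]
    simp [List.replicate_succ]

lemma pil_deltaFH_FH (w : List ℕ) : pil (deltaFH (FH w)) = pil w :=
  (pil_perm (by simpa [deltaFH] using deltaAux_perm 0 (FH w))).trans (pil_perm (FH_perm w))

lemma Iseq_FH_of_lt (w : List ℕ) (a b : ℕ) (ha : 0 < a) (hb : 0 < b) (hab : b < a) (r : ℕ) :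
    Iseq (FH (w ++ [a] ++ List.replicate r 0 ++ [b])) =
      List.replicate r 0 ++ (Iseq (FH (w ++ [a]))).map (· + 1) := by
  rw [FH_concat, lastPillar_append_zeros, lastPillar_concat_pos _ _ ha, if_neg (by omega)]
  cases r with
  | zero =>
    rw [List.replicate_zero, List.append_nil, trailingZeros_concat_pos _ _ ha, if_neg (by omega),
      Iseq_concat_pos _ _ hb, Iseq_deltaFH _ _ ha]
    simp
  | succ k =>
    rw [if_pos (one_le_trailingZeros _ _), FH_append_zeros _ _ ha, Iseq_concat_pos _ _ hb,
      gammaFH, List.dropLast_concat, ← List.cons_append, ← List.replicate_succ, Iseq,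
      IseqAux_append, pil_replicate, IseqAux_replicate, ← Iseq_deltaFH _ _ ha]
    rfl

lemma Iseq_FH_of_le (w : List ℕ) (a b : ℕ) (ha : 0 < a) (hab : a ≤ b) (k : ℕ) :
    Iseq (FH (w ++ [a] ++ List.replicate (k + 1) 0 ++ [b])) =
      List.replicate k 0 ++ (Iseq (FH (w ++ [a]))).map (· + 1) ++ [pil (w ++ [a])] := by
  rw [FH_concat, lastPillar_append_zeros, lastPillar_concat_pos _ _ ha, if_pos hab,
    Iseq_concat_pos _ _ (by omega), FH_append_zeros _ _ ha, ← Iseq_deltaFH _ _ ha,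
    ← pil_deltaFH_FH (w ++ [a]), Iseq, List.append_assoc, IseqAux_append, pil_replicate,
    IseqAux_replicate, IseqAux_append]
  simp [Iseq, IseqAux]

/-- key lemma on `F`. Let `w₁, w₂` be nonempty words with
`Last(w₁) = a > 0`, `w₂` containing no zero, `b = First(w₂)`, `ν = pil(w₁)`,
`t = des(w₂)`, and `μ = w₁ 0^r w₂`. Writing `I_w = Iseq (F w)` (so that
`F w = [Pos w, I_w]`), the sequence `I_μ` is given by the stated case analysis. -/
theorem FH_insertion_lemma (w₁ w₂ : List ℕ) (hw₁ : w₁ ≠ []) (hw₂ : w₂ ≠ [])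
    (ha : 0 < w₁.getLastD 0) (hz₂ : zeroCount w₂ = 0) (r : ℕ) :
    let μ := w₁ ++ List.replicate r 0 ++ w₂
    let a := w₁.getLastD 0
    let b := w₂.headD 0
    let ν := pil w₁
    let t := desL w₂
    (zeroCount w₁ ≠ 0 → b < a →
        Iseq (FH μ) = List.replicate r t ++ (Iseq (FH w₁)).map (· + t + 1)) ∧
    (zeroCount w₁ ≠ 0 → a < b → r = 0 →
        Iseq (FH μ) = (Iseq (FH w₁)).map (· + t)) ∧
    (zeroCount w₁ ≠ 0 → a < b → 0 < r →
        Iseq (FH μ) = List.replicate (r - 1) t ++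
          (Iseq (FH w₁)).map (· + t + 1) ++ [ν + t]) ∧
    (zeroCount w₁ = 0 → r = 0 → Iseq (FH μ) = []) ∧
    (zeroCount w₁ = 0 → 0 < r → b < a → Iseq (FH μ) = List.replicate r t) ∧
    (zeroCount w₁ = 0 → 0 < r → a < b →
        Iseq (FH μ) = List.replicate (r - 1) t ++ [ν + t]) := by
  intro μ a b ν t
  obtain ⟨w, a', rfl⟩ := (List.eq_nil_or_concat' w₁).resolve_left hw₁
  obtain ⟨b', s, rfl⟩ := List.exists_cons_of_ne_nil hw₂
  have ea : a = a' := by simp [a]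
  have eb : b = b' := by simp [b]
  have ha' : 0 < a' := by simpa using ha
  rw [zeroCount, List.count_eq_zero, List.mem_cons, not_or] at hz₂
  have hb' : 0 < b' := Nat.pos_of_ne_zero (Ne.symm hz₂.1)
  have eμ : Iseq (FH μ) = (Iseq (FH (w ++ [a'] ++ List.replicate r 0 ++ [b']))).map (· + t) := by
    rw [← Iseq_FH_append _ _ hb' _ hz₂.2]
    simp [μ]
  have hnil : zeroCount (w ++ [a']) = 0 → Iseq (FH (w ++ [a'])) = [] := fun h =>
    Iseq_eq_nil _ (((FH_perm _).count_eq 0).trans h)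
  have hlt : b < a → Iseq (FH μ) =
      List.replicate r t ++ (Iseq (FH (w ++ [a']))).map (· + t + 1) := by
    intro h
    rw [eμ, Iseq_FH_of_lt _ _ _ ha' hb' (by omega)]
    simp [Nat.add_assoc, Nat.add_comm]
  have hgt : a < b → 0 < r → Iseq (FH μ) = List.replicate (r - 1) t ++
      (Iseq (FH (w ++ [a']))).map (· + t + 1) ++ [ν + t] := by
    intro h hr
    obtain ⟨k, rfl⟩ := Nat.exists_eq_succ_of_ne_zero hr.ne'
    rw [eμ, Iseq_FH_of_le _ _ _ ha' (by omega)]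
    simp [ν, Nat.add_assoc, Nat.add_comm]
  refine ⟨fun _ => hlt, ?_, fun _ => hgt, ?_, ?_, ?_⟩
  · intro _ h hr
    subst hr
    rw [eμ, List.replicate_zero, List.append_nil, FH_concat, lastPillar_concat_pos _ _ ha',
      if_pos (by omega), Iseq_concat_pos _ _ hb']
  · intro h hr
    subst hr
    refine Iseq_eq_nil _ (((FH_perm _).count_eq 0).trans ?_)
    rw [zeroCount] at h
    simp only [μ, List.replicate_zero, List.append_nil, List.count_append, h, zero_add]
    rw [List.count_eq_zero]
    simpa using hz₂
  · intro h _ hba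
    simp [hlt hba, hnil h]
  · intro h hr hab
    simp [hgt hab hr, hnil h]
end
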